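/- arXiv:2202.06195 — 4 statements merged into one kernel-verified Lean document; each statement's English description precedes it below -/
import Mathlib

section
/- We have ∑_{n₁ > n₂ ≥ 1} 4^{n₁} / (binom(2n₁, n₁) · (2n₁)² · (2n₂−1)) = π²/8 − 2G + (7/4) ζ(3), where G = ∑_{k=0}^∞ (−1)^k/(2k+1)² is Catalan's constant, ζ(3) = ∑_{n=1}^∞ 1/n³, and the double sum is over integers n₁ > n₂ ≥ 1. -/
open Real

open MeasureTheory Set Filter Topology

lemma aux_hs {ι : Type*} {f g : ι → ℝ} {a b : ℝ} (h : HasSum f a) (h1 : ∀ n, g n = f n)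
    (h2 : b = a) : HasSum g b := by
  rw [h2, funext h1]; exact h

lemma aux_exp (k : ℕ) (c : ℝ) (hc : 0 < c) :
    IntegrableOn (fun x : ℝ => x ^ k * exp (-(c * x))) (Ioi 0) ∧
    ∫ x in Ioi (0:ℝ), x ^ k * exp (-(c * x)) = (k.factorial : ℝ) / c ^ (k + 1) := by
  have key := integral_rpow_mul_exp_neg_mul_Ioi (a := (k:ℝ) + 1) (by positivity) hc
  have hG : Gamma ((k:ℝ) + 1) = k.factorial := Real.Gamma_nat_eq_factorial k
  have e : (fun x : ℝ => x ^ ((k:ℝ) + 1 - 1) * exp (-(c * x))) = fun x => x ^ k * exp (-(c * x)) := by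
    funext x
    rw [add_sub_cancel_right, rpow_natCast]
  have e2 : (1 / c) ^ ((k:ℝ) + 1) = 1 / c ^ (k + 1) := by
    rw [← Nat.cast_succ, rpow_natCast, one_div_pow]
  rw [e, hG, e2] at key
  have hk : (0:ℝ) < k.factorial := by exact_mod_cast k.factorial_pos
  refine ⟨?_, by rw [key]; ring⟩
  apply Integrable.of_integral_ne_zero
  rw [key]
  positivity

lemma aux_dct (f g : ℕ → ℝ → ℝ) (F G : ℝ → ℝ) (hc : ∀ n, Continuous (f n))
    (h0 : ∀ n, ∀ x > 0, |f n x| ≤ g n x) (hs : ∀ x > 0, HasSum (fun n => f n x) (F x))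
    (hg : ∀ x > 0, HasSum (fun n => g n x) (G x))
    (hG : IntegrableOn G (Ioi 0)) :
    HasSum (fun n => ∫ x in Ioi (0:ℝ), f n x) (∫ x in Ioi (0:ℝ), F x) := by
  apply hasSum_integral_of_dominated_convergence g
  · intro n
    exact (hc n).aestronglyMeasurable
  · intro n
    filter_upwards [ae_restrict_mem measurableSet_Ioi] with x hx using h0 n x hx
  · filter_upwards [ae_restrict_mem measurableSet_Ioi] with x hx using (hg x hx).summable
  · refine Integrable.congr hG ?_
    filter_upwards [ae_restrict_mem measurableSet_Ioi] with x hx using (hg x hx).tsum_eq.symm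
  · filter_upwards [ae_restrict_mem measurableSet_Ioi] with x hx using hs x hx

lemma aux_dct0 (f : ℕ → ℝ → ℝ) (F : ℝ → ℝ) (hc : ∀ n, Continuous (f n))
    (h0 : ∀ n, ∀ x > 0, 0 ≤ f n x) (hs : ∀ x > 0, HasSum (fun n => f n x) (F x))
    (hG : IntegrableOn F (Ioi 0)) :
    HasSum (fun n => ∫ x in Ioi (0:ℝ), f n x) (∫ x in Ioi (0:ℝ), F x) :=
  aux_dct f f F F hc (fun n x hx => (abs_of_nonneg (h0 n x hx)).le) hs hs hG

lemma aux_sinh_bound (x : ℝ) (hx : 0 < x) : x / sinh x ≤ (1 + 2 * x) * exp (-x) := by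
  have hs : 0 < sinh x := sinh_pos_iff.2 hx
  rw [div_le_iff₀ hs, sinh_eq]
  have h1 : exp (-x) * exp x = 1 := by rw [← exp_add]; simp
  have h3 : (1 + 2 * x) * (exp (-x) * exp (-x)) ≤ 1 := by
    have h4 := add_one_le_exp (2 * x)
    have h5 : exp (2 * x) * (exp (-x) * exp (-x)) = 1 := by
      rw [← exp_add, ← exp_add]; simp; ring
    have : 0 < exp (-x) * exp (-x) := by positivity
    nlinarith
  have : (1 + 2 * x) * rexp (-x) * ((rexp x - rexp (-x)) / 2) =
    ((1 + 2 * x) * (exp (-x) * exp x) - (1 + 2 * x) * (exp (-x) * exp (-x))) / 2 := by ring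
  rw [this, h1]
  linarith

lemma aux_int_k (k : ℕ) : IntegrableOn (fun x : ℝ => x ^ (k + 1) / (2 * sinh x)) (Ioi 0) := by
  have h1 := (aux_exp k 1 one_pos).1
  have h2 := (aux_exp (k + 1) 1 one_pos).1
  have h3 := (h1.div_const 2).add h2
  refine Integrable.mono' h3 ?_ ?_
  · apply Measurable.aestronglyMeasurable
    have := Real.measurable_sinh
    fun_prop
  · filter_upwards [ae_restrict_mem measurableSet_Ioi] with x hx
    have hx : 0 < x := hx
    have hs : 0 < sinh x := sinh_pos_iff.2 hx
    rw [norm_of_nonneg (by positivity)]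
    have := mul_le_mul_of_nonneg_left (aux_sinh_bound x hx) (by positivity : 0 ≤ x ^ k / 2)
    simp only [Pi.add_apply, one_mul]
    calc _ = x ^ k / 2 * (x / sinh x) := by rw [pow_succ]; field_simp
      _ ≤ _ := this
      _ = _ := by ring

lemma aux_cosh_bound (x : ℝ) : 1 / cosh x ≤ 2 * exp (-x) := by
  have hc := cosh_pos x
  rw [div_le_iff₀ hc, cosh_eq]
  have h1 : exp (-x) * exp x = 1 := by rw [← exp_add]; simp
  nlinarith [exp_pos (-x)]

lemma aux_int_c : IntegrableOn (fun x : ℝ => x / cosh x) (Ioi 0) := by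
  have h2 := (aux_exp 1 1 one_pos).1
  refine Integrable.mono' (h2.const_mul 2) ?_ ?_
  · apply Measurable.aestronglyMeasurable
    have := Real.measurable_cosh
    fun_prop
  · filter_upwards [ae_restrict_mem measurableSet_Ioi] with x hx
    have hx : 0 < x := hx
    have hs := cosh_pos x
    rw [norm_of_nonneg (by positivity)]
    have := mul_le_mul_of_nonneg_left (aux_cosh_bound x) hx.le
    simp only [one_mul, pow_one]
    calc _ = x * (1 / cosh x) := by field_simp
      _ ≤ _ := this
      _ = _ := by ring

lemma aux_geom_s (x : ℝ) (hx : 0 < x) :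
    HasSum (fun k : ℕ => exp (-((2 * (k:ℝ) + 1) * x))) (1 / (2 * sinh x)) := by
  have hs : 0 < sinh x := sinh_pos_iff.2 hx
  have hr : exp (-(2 * x)) < 1 := by rw [exp_lt_one_iff]; linarith
  have h := (hasSum_geometric_of_lt_one (exp_pos _).le hr).mul_left (exp (-x))
  refine aux_hs h (fun k => ?_) ?_
  · rw [← exp_nat_mul, ← exp_add]
    congr 1; ring
  · have h1 : exp (-x) * exp x = 1 := by rw [← exp_add]; simp
    have h2 : exp (-(2 * x)) = exp (-x) * exp (-x) := by rw [← exp_add]; congr 1; ring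
    have h3 : 1 - exp (-(2 * x)) ≠ 0 := by linarith
    rw [← div_eq_mul_inv, div_eq_div_iff (by positivity) h3, sinh_eq, h2]
    linear_combination -h1

lemma aux_geom_c (x : ℝ) (hx : 0 < x) :
    HasSum (fun k : ℕ => (-1) ^ k * exp (-((2 * (k:ℝ) + 1) * x))) (1 / (2 * cosh x)) := by
  have hs : 0 < cosh x := cosh_pos x
  have hr : exp (-(2 * x)) < 1 := by rw [exp_lt_one_iff]; linarith
  have h := (hasSum_geometric_of_abs_lt_one (r := - exp (-(2 * x)))
    (by rwa [abs_neg, abs_of_pos (exp_pos _)])).mul_left (exp (-x))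
  refine aux_hs h (fun k => ?_) ?_
  · rw [neg_pow (rexp _), ← exp_nat_mul, mul_left_comm, ← exp_add]
    congr 2; ring
  · have h1 : exp (-x) * exp x = 1 := by rw [← exp_add]; simp
    have h2 : exp (-(2 * x)) = exp (-x) * exp (-x) := by rw [← exp_add]; congr 1; ring
    have h3 : 1 - -exp (-(2 * x)) ≠ 0 := by have := exp_pos (-(2*x)); linarith
    rw [← div_eq_mul_inv, div_eq_div_iff (by positivity) h3, cosh_eq, h2]
    linear_combination -h1

/-- ∫ x^(k+1)/(2 sinh x) -/
lemma aux_val_s (k : ℕ) : HasSum (fun n : ℕ => ((k + 1).factorial : ℝ) / (2 * (n:ℝ) + 1) ^ (k + 2))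
    (∫ x in Ioi (0:ℝ), x ^ (k + 1) / (2 * sinh x)) := by
  have := aux_dct0 (fun n x => x ^ (k + 1) * exp (-((2 * (n:ℝ) + 1) * x))) _ (by intro n; fun_prop)
    (by intro n x hx; positivity)
    (fun x hx => by
      have := (aux_geom_s x hx).mul_left (x ^ (k+1))
      rwa [mul_one_div] at this) (aux_int_k k)
  convert this using 2 with n
  exact ((aux_exp (k+1) (2 * (n:ℝ) + 1) (by positivity)).2).symm

lemma aux_val_c : HasSum (fun n : ℕ => (-1) ^ n / (2 * (n:ℝ) + 1) ^ 2)
    (∫ x in Ioi (0:ℝ), x / (2 * cosh x)) := by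
  have := aux_dct (fun n x => (-1) ^ n * (x ^ 1 * exp (-((2 * (n:ℝ) + 1) * x))))
    (fun n x => x ^ 1 * exp (-((2 * (n:ℝ) + 1) * x))) (fun x => x / (2 * cosh x)) _
    (by intro n; fun_prop)
    (by intro n x hx
        rw [abs_mul, abs_pow, abs_neg, abs_one, one_pow, one_mul, abs_of_nonneg]; positivity)
    (fun x hx => by
      have := (aux_geom_c x hx).mul_left x
      rw [mul_one_div] at this
      exact aux_hs this (fun n => by ring) rfl)
    (fun x hx => by
      have := (aux_geom_s x hx).mul_left (x ^ 1)
      rwa [mul_one_div] at this) (aux_int_k 0)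
  convert this using 2 with n
  rw [integral_const_mul, (aux_exp 1 (2 * (n:ℝ) + 1) (by positivity)).2]
  simp [div_eq_mul_inv]


noncomputable def bb (n : ℕ) : ℝ := ∏ i ∈ Finset.range n, (2 * (i:ℝ) + 2) / (2 * i + 3)

lemma bb_zero : bb 0 = 1 := by simp [bb]

lemma bb_succ (n : ℕ) : bb (n + 1) = bb n * ((2 * (n:ℝ) + 2) / (2 * n + 3)) := by
  rw [bb, Finset.prod_range_succ, ← bb]

lemma bb_pos (n : ℕ) : 0 < bb n := by
  unfold bb; positivity

lemma bb_choose (n : ℕ) : (4:ℝ) ^ (n + 1) = bb n * (2 * n + 2) * (Nat.choose (2 * (n + 1)) (n + 1) : ℝ) := by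
  induction n with
  | zero => simp [bb_zero]; norm_num
  | succ n ih =>
    have h := Nat.succ_mul_centralBinom_succ (n + 1)
    simp only [Nat.centralBinom] at h
    have h' : ((n:ℝ) + 2) * (Nat.choose (2 * (n + 1 + 1)) (n + 1 + 1) : ℝ) =
      2 * (2 * ((n:ℝ) + 1) + 1) * (Nat.choose (2 * (n + 1)) (n + 1) : ℝ) := by
      exact_mod_cast h
    rw [pow_succ, ih, bb_succ]
    push_cast
    have : (2 * (n:ℝ) + 3) ≠ 0 := by positivity
    field_simp
    linear_combination (-2) * bb n * h'

lemma aux_tc_le (k : ℕ) (x : ℝ) (hx : 0 ≤ x) : |sinh x ^ k / cosh x ^ (k + 1)| ≤ 2 * exp (-x) := by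
  have hc := cosh_pos x
  have hs : 0 ≤ sinh x := sinh_nonneg_iff.2 hx
  have hle : sinh x ≤ cosh x := (sinh_lt_cosh x).le
  rw [abs_of_nonneg (by positivity)]
  refine le_trans ?_ (aux_cosh_bound x)
  rw [div_le_div_iff₀ (by positivity) hc, pow_succ]
  have := pow_le_pow_left₀ hs hle k
  nlinarith

lemma aux_tc_cont (k : ℕ) : Continuous (fun x : ℝ => sinh x ^ k / cosh x ^ (k + 1)) := by
  have := Real.continuous_sinh
  have := Real.continuous_cosh
  refine Continuous.div (by fun_prop) (by fun_prop) (fun x => ?_)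
  exact pow_ne_zero _ (cosh_pos x).ne'

lemma aux_e_int : IntegrableOn (fun x : ℝ => exp (-x)) (Ioi 0) := by
  simpa using (aux_exp 0 1 one_pos).1

lemma aux_tc_int (k : ℕ) : IntegrableOn (fun x : ℝ => sinh x ^ k / cosh x ^ (k + 1)) (Ioi 0) := by
  refine Integrable.mono' (aux_e_int.const_mul 2) (aux_tc_cont k).aestronglyMeasurable ?_
  filter_upwards [ae_restrict_mem measurableSet_Ioi] with x hx using aux_tc_le k x (le_of_lt hx)

lemma aux_exp_tendsto : Tendsto (fun x : ℝ => exp (-x)) atTop (𝓝 0) :=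
  Real.tendsto_exp_neg_atTop_nhds_zero

lemma aux_tc_tendsto (k : ℕ) : Tendsto (fun x : ℝ => sinh x ^ k / cosh x ^ (k + 1)) atTop (𝓝 0) := by
  have h : Tendsto (fun x : ℝ => 2 * exp (-x)) atTop (𝓝 0) := by
    simpa using aux_exp_tendsto.const_mul 2
  refine squeeze_zero_norm' ?_ h
  filter_upwards [eventually_ge_atTop 0] with x hx using aux_tc_le k x hx

lemma aux_tc_deriv (k : ℕ) (x : ℝ) : HasDerivAt (fun x : ℝ => sinh x ^ (k + 1) / cosh x ^ (k + 1 + 1))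
    (((k:ℝ) + 1) * (sinh x ^ k / cosh x ^ (k + 1)) -
      ((k:ℝ) + 2) * (sinh x ^ (k + 2) / cosh x ^ (k + 2 + 1))) x := by
  have hc := (cosh_pos x).ne'
  have h := ((Real.hasDerivAt_sinh x).pow (k + 1)).div ((Real.hasDerivAt_cosh x).pow (k + 1 + 1))
    (pow_ne_zero _ hc)
  refine h.congr_deriv ?_
  push_cast
  simp only [Nat.add_sub_cancel, Pi.pow_apply]
  field_simp
  ring

lemma aux_tc_val (n : ℕ) :
    ∫ x in Ioi (0:ℝ), sinh x ^ (2 * n + 1) / cosh x ^ (2 * n + 1 + 1) = bb n := by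
  induction n with
  | zero =>
    have h := integral_Ioi_of_hasDerivAt_of_tendsto' (a := 0) (m := 0)
      (f := fun x : ℝ => - (cosh x)⁻¹) (f' := fun x => sinh x ^ (2 * 0 + 1) / cosh x ^ (2 * 0 + 1 + 1))
      (fun x _ => by
        refine ((Real.hasDerivAt_cosh x).inv (cosh_pos x).ne').neg.congr_deriv ?_
        simp; ring) (aux_tc_int _) (by simpa using (aux_tc_tendsto 0).neg)
    rw [h, bb_zero]; simp
  | succ n ih =>
    have i1 := (aux_tc_int (2 * n + 1)).const_mul (((2 * n + 1 : ℕ):ℝ) + 1)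
    have i2 := (aux_tc_int (2 * n + 1 + 2)).const_mul (((2 * n + 1 : ℕ):ℝ) + 2)
    have h := integral_Ioi_of_hasDerivAt_of_tendsto' (a := 0)
      (fun x _ => aux_tc_deriv (2 * n + 1) x) (i1.sub i2) (aux_tc_tendsto _)
    rw [integral_sub i1 i2, integral_const_mul, integral_const_mul, ih] at h
    rw [bb_succ]
    simp at h
    have e : 2 * (n + 1) + 1 = 2 * n + 1 + 2 := by ring
    rw [e]
    have : (2 * (n:ℝ) + 3) ≠ 0 := by positivity
    field_simp
    linear_combination -h

lemma aux_v_le (n : ℕ) (x : ℝ) (hx : 0 ≤ x) :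
    0 ≤ (1 - exp (-x) ^ 2) ^ n * exp (-x) ∧ (1 - exp (-x) ^ 2) ^ n * exp (-x) ≤ exp (-x) := by
  have h1 : exp (-x) ≤ 1 := by rw [exp_le_one_iff]; linarith
  have h0 := exp_pos (-x)
  have h2 : 0 ≤ 1 - exp (-x) ^ 2 := by nlinarith
  have h3 : (1 - exp (-x) ^ 2) ^ n ≤ 1 := pow_le_one₀ h2 (by nlinarith)
  exact ⟨by positivity, by nlinarith⟩

lemma aux_v_int (n : ℕ) : IntegrableOn (fun x : ℝ => (1 - exp (-x) ^ 2) ^ n * exp (-x)) (Ioi 0) := by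
  refine Integrable.mono' aux_e_int (by fun_prop) ?_
  filter_upwards [ae_restrict_mem measurableSet_Ioi] with x hx
  have h := aux_v_le n x (le_of_lt hx)
  rw [norm_of_nonneg h.1]; exact h.2

lemma aux_v_deriv (n : ℕ) (x : ℝ) :
    HasDerivAt (fun x : ℝ => -((1 - exp (-x) ^ 2) ^ (n + 1) * exp (-x)))
    ((2 * (n:ℝ) + 3) * ((1 - exp (-x) ^ 2) ^ (n + 1) * exp (-x)) -
      (2 * (n:ℝ) + 2) * ((1 - exp (-x) ^ 2) ^ n * exp (-x))) x := by
  have h1 : HasDerivAt (fun x : ℝ => exp (-x)) (exp (-x) * (-1)) x := (hasDerivAt_neg x).exp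
  have h := ((((h1.pow 2).const_sub 1).pow (n + 1)).mul h1).neg
  refine h.congr_deriv ?_
  push_cast
  simp only [Nat.add_sub_cancel, Pi.pow_apply]
  ring

lemma aux_v_val (n : ℕ) : ∫ x in Ioi (0:ℝ), (1 - exp (-x) ^ 2) ^ n * exp (-x) = bb n := by
  induction n with
  | zero =>
    have h := (aux_exp 0 1 one_pos).2
    simpa [bb_zero] using h
  | succ n ih =>
    have i1 := (aux_v_int (n + 1)).const_mul (2 * (n:ℝ) + 3)
    have i2 := (aux_v_int n).const_mul (2 * (n:ℝ) + 2)
    have ht : Tendsto (fun x : ℝ => -((1 - exp (-x) ^ 2) ^ (n + 1) * exp (-x))) atTop (𝓝 0) := by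
      refine squeeze_zero_norm' ?_ aux_exp_tendsto
      filter_upwards [eventually_ge_atTop 0] with x hx
      have h := aux_v_le (n + 1) x hx
      rw [norm_neg, norm_of_nonneg h.1]; exact h.2
    have h := integral_Ioi_of_hasDerivAt_of_tendsto' (a := 0)
      (fun x _ => aux_v_deriv n x) (i1.sub i2) ht
    rw [integral_sub i1 i2, integral_const_mul, integral_const_mul, ih] at h
    rw [bb_succ]
    simp at h
    have : (2 * (n:ℝ) + 3) ≠ 0 := by positivity
    rw [← mul_div_assoc, eq_div_iff this]
    linear_combination h

lemma aux_artanh (x : ℝ) : HasSum (fun k : ℕ => tanh x ^ (2 * k + 1) / (2 * (k:ℝ) + 1)) x := by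
  have h := (Real.hasSum_log_sub_log_of_abs_lt_one (abs_tanh_lt_one x)).mul_left (1 / 2)
  refine aux_hs h (fun k => by ring) ?_
  have h1 := artanh_tanh x
  have a := neg_one_lt_tanh x
  have b := tanh_lt_one x
  rw [artanh_eq_half_log ⟨a.le, b.le⟩, log_div (by linarith) (by linarith)] at h1
  exact h1.symm

noncomputable def oo (n : ℕ) : ℝ := ∑ i ∈ Finset.range n, 1 / (2 * (i:ℝ) + 1)

lemma aux_cauchy (x : ℝ) (hx : 0 ≤ x) :
    HasSum (fun n : ℕ => tanh x ^ (2 * n + 2) * (oo (n + 1) / ((n:ℝ) + 1))) (x ^ 2) := by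
  have h := aux_artanh x
  have hn : Summable (fun k : ℕ => ‖tanh x ^ (2 * k + 1) / (2 * (k:ℝ) + 1)‖) := h.summable.norm
  have h2 := hasSum_sum_range_mul_of_summable_norm hn hn
  rw [h.tsum_eq] at h2
  refine aux_hs h2 (fun n => ?_) (by ring)
  have e : ∀ k ∈ Finset.range (n + 1), tanh x ^ (2 * k + 1) / (2 * (k:ℝ) + 1) *
      (tanh x ^ (2 * (n - k) + 1) / (2 * ((n - k : ℕ):ℝ) + 1)) =
      tanh x ^ (2 * n + 2) / (2 * (n:ℝ) + 2) *
        (1 / (2 * (k:ℝ) + 1) + 1 / (2 * ((n - k : ℕ):ℝ) + 1)) := by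
    intro k hk
    have hk : k ≤ n := by simpa [Nat.lt_succ_iff] using hk
    obtain ⟨j, rfl⟩ := Nat.exists_eq_add_of_le hk
    have : k + j - k = j := by omega
    rw [this]
    push_cast
    have h3 : (2 * ((k:ℝ) + j) + 2) ≠ 0 := by positivity
    have e2 : tanh x ^ (2 * (k + j) + 2) = tanh x ^ (2 * k + 1) * tanh x ^ (2 * j + 1) := by ring
    rw [e2]
    field_simp
    ring
  rw [Finset.sum_congr rfl e, ← Finset.mul_sum, Finset.sum_add_distrib]
  have e3 : ∑ k ∈ Finset.range (n + 1), 1 / (2 * ((n - k : ℕ):ℝ) + 1) = oo (n + 1) := by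
    rw [oo, ← Finset.sum_range_reflect (fun i : ℕ => 1 / (2 * (i:ℝ) + 1))]
    refine Finset.sum_congr rfl fun k _ => ?_
    simp
  rw [e3, ← oo]
  field_simp
  ring

lemma main1 : HasSum (fun n : ℕ => bb n * (oo (n + 1) / (2 * (n:ℝ) + 2)))
    (∫ x in Ioi (0:ℝ), x ^ (1 + 1) / (2 * sinh x)) := by
  have ho : ∀ n, 0 ≤ oo n := fun n => by unfold oo; positivity
  have := aux_dct0
    (fun n x => (sinh x ^ (2 * n + 1) / cosh x ^ (2 * n + 1 + 1)) * (oo (n + 1) / (2 * (n:ℝ) + 2)))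
    (fun x => x ^ (1 + 1) / (2 * sinh x)) (fun n => (aux_tc_cont _).mul_const _)
    (fun n x hx => by
      have := sinh_pos_iff.2 hx
      have := cosh_pos x
      have := ho (n + 1)
      positivity)
    (fun x hx => by
      have hs := sinh_pos_iff.2 hx
      have hc := cosh_pos x
      refine aux_hs ((aux_cauchy x hx.le).mul_right (1 / (2 * sinh x))) (fun n => ?_) (by ring)
      rw [tanh_eq_sinh_div_cosh, div_pow]
      field_simp
      ring) (aux_int_k 1)
  refine aux_hs this (fun n => ?_) rfl
  rw [integral_mul_const, aux_tc_val]

lemma main2 : HasSum (fun n : ℕ => bb n * (1 / (2 * (n:ℝ) + 1)))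
    (∫ x in Ioi (0:ℝ), x / cosh x) := by
  have := aux_dct0
    (fun n x => (sinh x ^ (2 * n + 1) / cosh x ^ (2 * n + 1 + 1)) * (1 / (2 * (n:ℝ) + 1)))
    (fun x => x / cosh x) (fun n => (aux_tc_cont _).mul_const _)
    (fun n x hx => by
      have := sinh_pos_iff.2 hx
      have := cosh_pos x
      positivity)
    (fun x hx => by
      have hc := cosh_pos x
      refine aux_hs ((aux_artanh x).mul_right (1 / cosh x)) (fun n => ?_) (by ring)
      rw [tanh_eq_sinh_div_cosh, div_pow]
      field_simp
      ring) aux_int_c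
  refine aux_hs this (fun n => ?_) rfl
  rw [integral_mul_const, aux_tc_val]

lemma main3 : HasSum (fun n : ℕ => bb n * (1 / (2 * (n:ℝ) + 2)))
    (∫ x in Ioi (0:ℝ), x ^ (0 + 1) / (2 * sinh x)) := by
  have := aux_dct0
    (fun n x => ((1 - exp (-x) ^ 2) ^ n * exp (-x)) * (1 / (2 * (n:ℝ) + 2)))
    (fun x => x ^ (0 + 1) / (2 * sinh x)) (fun n => by fun_prop)
    (fun n x hx => by
      have := (aux_v_le n x hx.le).1
      positivity)
    (fun x hx => by
      have hs := sinh_pos_iff.2 hx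
      have h1 : exp (-x) < 1 := by rw [exp_lt_one_iff]; linarith
      have h0 := exp_pos (-x)
      have h2 : 0 < 1 - exp (-x) ^ 2 := by nlinarith
      have h3 : |1 - exp (-x) ^ 2| < 1 := by rw [abs_of_pos h2]; nlinarith
      refine aux_hs ((hasSum_pow_div_log_of_abs_lt_one h3).mul_right
        (exp (-x) / (2 * (1 - exp (-x) ^ 2)))) (fun n => ?_) ?_
      · field_simp
        ring
      · rw [sub_sub_cancel, log_pow, log_exp]
        have h1 : exp (-x) * exp x = 1 := by rw [← exp_add]; simp
        push_cast
        rw [← mul_div_assoc, div_eq_div_iff (by positivity) (by positivity), sinh_eq]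
        linear_combination (-2 * x) * h1) (aux_int_k 0)
  refine aux_hs this (fun n => ?_) rfl
  rw [integral_mul_const, aux_v_val]

lemma aux_odd (s : ℕ) (hs : s ≠ 0) (Z W : ℝ) (h : HasSum (fun n : ℕ => 1 / (n:ℝ) ^ s) Z)
    (h2 : HasSum (fun n : ℕ => 1 / (2 * (n:ℝ) + 1) ^ s) W) : W = (1 - 1 / 2 ^ s) * Z := by
  have e : HasSum (fun n : ℕ => 1 / ((2 * n : ℕ):ℝ) ^ s) (1 / 2 ^ s * Z) := by
    refine aux_hs (h.mul_left _) (fun n => ?_) rfl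
    push_cast
    rw [mul_pow, ← one_div_mul_one_div]
  have o : HasSum (fun n : ℕ => 1 / ((2 * n + 1 : ℕ):ℝ) ^ s) W := by
    refine aux_hs h2 (fun n => ?_) rfl
    push_cast
    rfl
  have := (HasSum.even_add_odd (f := fun n : ℕ => 1 / (n:ℝ) ^ s) e o).unique h
  linarith

lemma aux_total : HasSum (fun n : ℕ => bb n / (2 * (n:ℝ) + 2) * oo n)
    (π ^ 2 / 8 - 2 * (∑' k : ℕ, (-1 : ℝ) ^ k / (2 * (k : ℝ) + 1) ^ 2) +
      7 / 4 * ∑' n : ℕ, 1 / ((n : ℝ) + 1) ^ 3) := by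
  have h := (main1.sub main2).add main3
  refine aux_hs h (fun n => ?_) ?_
  · have : oo (n + 1) = oo n + 1 / (2 * (n:ℝ) + 1) := by rw [oo, Finset.sum_range_succ, ← oo]
    rw [this]
    field_simp
    ring
  · have e1 : (∫ x in Ioi (0:ℝ), x ^ (0 + 1) / (2 * sinh x)) = π ^ 2 / 8 := by
      rw [aux_odd 2 two_ne_zero _ _ hasSum_zeta_two (aux_hs (aux_val_s 0) (fun n => by simp) rfl)]
      ring
    have e2 : (∫ x in Ioi (0:ℝ), x / cosh x) =
        2 * (∑' k : ℕ, (-1 : ℝ) ^ k / (2 * (k : ℝ) + 1) ^ 2) := by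
      rw [aux_val_c.tsum_eq, ← integral_const_mul]
      congr 1
      funext x
      have := cosh_pos x
      field_simp
    have e3 : (∫ x in Ioi (0:ℝ), x ^ (1 + 1) / (2 * sinh x)) =
        7 / 4 * ∑' n : ℕ, 1 / ((n : ℝ) + 1) ^ 3 := by
      have hz : Summable (fun n : ℕ => 1 / (n:ℝ) ^ 3) :=
        Real.summable_one_div_nat_pow.2 (by norm_num)
      have hz2 : ∑' n : ℕ, 1 / (n:ℝ) ^ 3 = ∑' n : ℕ, 1 / ((n : ℝ) + 1) ^ 3 := by
        rw [hz.tsum_eq_zero_add]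
        simp
      have := aux_odd 3 three_ne_zero _ ((∫ x in Ioi (0:ℝ), x ^ (1 + 1) / (2 * sinh x)) / 2)
        hz.hasSum (aux_hs ((aux_val_s 1).div_const 2) (fun n => by simp [Nat.factorial]; field_simp) rfl)
      rw [hz2] at this
      linarith
    rw [e1, e2, e3]
    ring

def eqv : (Σ n : ℕ, Fin n) ≃ {p : ℕ × ℕ // p.2 < p.1 ∧ 1 ≤ p.2} where
  toFun x := ⟨(x.1 + 1, x.2.1 + 1), by have := x.2.2; constructor <;> simp⟩
  invFun p := ⟨p.1.1 - 1, ⟨p.1.2 - 1, by have := p.2; omega⟩⟩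
  left_inv x := by simp
  right_inv p := by
    obtain ⟨⟨a, b⟩, h1, h2⟩ := p
    simp only [Subtype.mk.injEq, Prod.mk.injEq]
    simp only at h1 h2
    omega

/-- `∑_{n₁ > n₂ ≥ 1} 4^{n₁}/(binom(2n₁,n₁)(2n₁)²(2n₂−1)) = π²/8 − 2G + (7/4)ζ(3)`. -/
theorem stmt15 :
    (∑' p : {p : ℕ × ℕ // p.2 < p.1 ∧ 1 ≤ p.2},
      (4 : ℝ) ^ p.1.1 /
        ((Nat.choose (2 * p.1.1) p.1.1 : ℝ) * (2 * (p.1.1 : ℝ)) ^ 2 *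
          (2 * (p.1.2 : ℝ) - 1))) =
    π ^ 2 / 8 - 2 * (∑' k : ℕ, (-1 : ℝ) ^ k / (2 * (k : ℝ) + 1) ^ 2) +
      7 / 4 * ∑' n : ℕ, 1 / ((n : ℝ) + 1) ^ 3 := by
  rw [← eqv.tsum_eq]
  have e : ∀ x : (Σ n : ℕ, Fin n), (4 : ℝ) ^ (eqv x).1.1 /
        ((Nat.choose (2 * (eqv x).1.1) (eqv x).1.1 : ℝ) * (2 * ((eqv x).1.1 : ℝ)) ^ 2 *
          (2 * ((eqv x).1.2 : ℝ) - 1)) =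
        bb x.1 / (2 * (x.1:ℝ) + 2) * (1 / (2 * ((x.2 : ℕ):ℝ) + 1)) := by
    rintro ⟨n, k⟩
    simp only [eqv, Equiv.coe_fn_mk]
    rw [bb_choose]
    have hc : (0:ℝ) < (Nat.choose (2 * (n + 1)) (n + 1) : ℝ) := by
      exact_mod_cast Nat.choose_pos (by omega)
    have h2 : (2 * (((k:ℕ) + 1 : ℕ):ℝ) - 1) = 2 * ((k:ℕ):ℝ) + 1 := by push_cast; ring
    rw [h2]
    push_cast
    field_simp
  simp_rw [e]
  have hf : ∀ n : ℕ, HasSum (fun k : Fin n => bb n / (2 * (n:ℝ) + 2) * (1 / (2 * ((k : ℕ):ℝ) + 1)))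
      (bb n / (2 * (n:ℝ) + 2) * oo n) := by
    intro n
    have := hasSum_fintype
      (fun k : Fin n => bb n / (2 * (n:ℝ) + 2) * (1 / (2 * ((k : ℕ):ℝ) + 1)))
    rwa [← Finset.mul_sum, Fin.sum_univ_eq_sum_range (fun k : ℕ => 1 / (2 * (k:ℝ) + 1)) n] at this
  have hS : Summable (fun x : (Σ n : ℕ, Fin n) =>
      bb x.1 / (2 * (x.1:ℝ) + 2) * (1 / (2 * ((x.2 : ℕ):ℝ) + 1))) := by
    rw [summable_sigma_of_nonneg]
    · refine ⟨fun n => (hf n).summable, ?_⟩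
      refine aux_total.summable.congr fun n => ?_
      exact ((hf n).tsum_eq).symm
    · intro x
      have := bb_pos x.1
      positivity
  exact (HasSum.sigma_of_hasSum aux_total hf hS).tsum_eq
end

section
/- We have ∑_{n₁ ≥ n₂ ≥ n₃ ≥ 1} 4^{n₁} / (binom(2n₁, n₁) · n₁² · (2n₂+1) · (2n₃−1)) = 7 ζ(3) + 8G² − 8G, where G = ∑_{k=0}^∞ (−1)^k/(2k+1)² is Catalan's constant, ζ(3) = ∑_{n=1}^∞ 1/n³, and the triple sum is over integers n₁ ≥ n₂ ≥ n₃ ≥ 1. -/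
open Real

namespace S16

open Filter Topology MeasureTheory

lemma hsc {f f' : ℕ → ℝ} {a a' : ℝ} (h : HasSum f a) (hf : ∀ k, f' k = f k) (ha : a' = a) :
    HasSum f' a' := by
  rw [ha, show f' = f from funext hf]
  exact h

lemma tele {f x : ℕ → ℝ} (hf : ∀ k, 0 ≤ f k) (h : ∀ k, f k = x k - x (k+1))
    (hx : Tendsto x atTop (𝓝 0)) : HasSum f (x 0) := by
  rw [hasSum_iff_tendsto_nat_of_nonneg hf]
  have : ∀ n, ∑ i ∈ Finset.range n, f i = x 0 - x n := by
    intro n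
    rw [Finset.sum_congr rfl (fun i _ => h i), Finset.sum_range_sub']
  simp only [this]
  simpa using tendsto_const_nhds.sub hx

/-- The kernel function. -/
noncomputable def T (s : ℝ) : ℝ := (1 - s^2) / (1 + s^2)

/-- The connector. -/
noncomputable def I (n k : ℕ) : ℝ := ∫ s in (0:ℝ)..1, T s ^ n * s ^ (2*k)

lemma den (s : ℝ) : (1 + s^2) ≠ 0 := by positivity

lemma T_cont : Continuous T := by
  unfold T
  exact Continuous.div (by fun_prop) (by fun_prop) den

lemma int_ok (n k : ℕ) : IntervalIntegrable (fun s => T s ^ n * s ^ (2*k)) volume 0 1 :=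
  ((T_cont.pow n).mul (continuous_id.pow _)).intervalIntegrable _ _

lemma T_nonneg {s : ℝ} (h0 : 0 ≤ s) (h1 : s ≤ 1) : 0 ≤ T s := by
  unfold T
  apply div_nonneg _ (by positivity)
  nlinarith

lemma T_le {s : ℝ} : T s ≤ 1 := by
  unfold T
  rw [div_le_one (by positivity)]
  nlinarith [sq_nonneg s]

lemma T_lt {s : ℝ} (h0 : 0 < s) : T s < 1 := by
  unfold T
  rw [div_lt_one (by positivity)]
  nlinarith [sq_pos_of_pos h0]

lemma I_nonneg (n k : ℕ) : 0 ≤ I n k := by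
  apply intervalIntegral.integral_nonneg (by norm_num)
  intro s hs
  have := T_nonneg hs.1 hs.2
  have := hs.1
  positivity

lemma I_zero (k : ℕ) : I 0 k = 1 / (2*k+1) := by
  simp [I, integral_pow]

lemma R2 (n k : ℕ) : I n k - I n (k+1) = I (n+1) k + I (n+1) (k+1) := by
  unfold I
  rw [← intervalIntegral.integral_sub (int_ok _ _) (int_ok _ _),
    ← intervalIntegral.integral_add (int_ok _ _) (int_ok _ _)]
  congr 1
  ext s
  have h : T s * (1 + s^2) = 1 - s^2 := by
    unfold T; field_simp [den s]
  have e : s ^ (2*(k+1)) = s^(2*k) * s^2 := by ring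
  rw [e, pow_succ]
  linear_combination (- T s ^ n * s^(2*k)) * h

lemma T_deriv (s : ℝ) : HasDerivAt T (-4*s/(1+s^2)^2) s := by
  unfold T
  have h1 : HasDerivAt (fun s : ℝ => 1 - s^2) (-(2*s)) s := by
    simpa using (hasDerivAt_pow 2 s).const_sub 1
  have h2 : HasDerivAt (fun s : ℝ => 1 + s^2) (2*s) s := by
    simpa using (hasDerivAt_pow 2 s).const_add 1
  refine (h1.fun_div h2 (den s)).congr_deriv ?_
  have := den s
  field_simp
  ring

lemma F1 (n k : ℕ) : ((n:ℝ)+1) * (I n k - I (n+2) k) = (2*k+1) * I (n+1) k := by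
  have hd : ∀ s ∈ Set.uIcc (0:ℝ) 1, HasDerivAt (fun s => T s ^ (n+1) * s^(2*k+1))
      ((2*k+1) * (T s ^ (n+1) * s^(2*k)) -
        ((n:ℝ)+1) * (T s ^ n * s^(2*k) - T s ^(n+2) * s^(2*k))) s := by
    intro s _
    refine (((T_deriv s).fun_pow (n+1)).fun_mul (hasDerivAt_pow (2*k+1) s)).congr_deriv ?_
    have h : 1 - T s ^2 = 4*s^2/(1+s^2)^2 := by
      unfold T; field_simp [den s]; ring
    have h' : s * (-4*s/(1+s^2)^2) = T s ^ 2 - 1 := by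
      rw [← neg_sub, h]; ring
    push_cast
    linear_combination (-1) * (-((n:ℝ)+1) * T s ^ n * s^(2*k)) * h'
  have hI := intervalIntegral.integral_eq_sub_of_hasDerivAt hd (by
    apply Continuous.intervalIntegrable
    have := T_cont
    fun_prop)
  rw [intervalIntegral.integral_sub ((int_ok _ _).const_mul _)
    (((int_ok _ _).sub (int_ok _ _)).const_mul _), intervalIntegral.integral_const_mul,
    intervalIntegral.integral_const_mul, intervalIntegral.integral_sub (int_ok _ _) (int_ok _ _)]
    at hI
  have : T 1 = 0 := by simp [T]
  simp only [this] at hI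
  simp at hI
  unfold I
  linarith

lemma I_anti (n k : ℕ) : I (n+1) k ≤ I n k := by
  unfold I
  apply intervalIntegral.integral_mono_on (by norm_num) (int_ok _ _) (int_ok _ _)
  intro s hs
  have h0 := T_nonneg hs.1 hs.2
  have h1 := T_le (s := s)
  have := hs.1
  gcongr ?_ * _
  exact pow_le_pow_of_le_one h0 h1 (Nat.le_succ n)

lemma I_le (n k : ℕ) : I n k ≤ 1 / (2*k+1) := by
  induction n with
  | zero => exact (I_zero k).le
  | succ n ih => exact (I_anti n k).trans ih

lemma I_tendsto (k : ℕ) : Tendsto (fun n => I n k) atTop (𝓝 0) := by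
  have := intervalIntegral.tendsto_integral_filter_of_dominated_convergence (μ := volume)
    (a := 0) (b := 1) (F := fun n s => T s ^ n * s ^ (2*k)) (f := fun _ => (0:ℝ)) (l := atTop)
    (fun _ => 1) ?_ ?_ ?_ ?_
  · simpa [I] using this
  · refine Eventually.of_forall fun n => ?_
    exact ((T_cont.pow n).mul (continuous_id.pow _)).aestronglyMeasurable
  · refine Eventually.of_forall fun n => Eventually.of_forall fun s hs => ?_
    rw [Set.uIoc_of_le (by norm_num)] at hs
    have h0 := T_nonneg hs.1.le hs.2
    have h1 := T_le (s := s)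
    have h2 := hs.1.le
    rw [Real.norm_of_nonneg (by positivity)]
    exact mul_le_one₀ (pow_le_one₀ h0 h1) (by positivity) (pow_le_one₀ h2 hs.2)
  · simp
  · refine Eventually.of_forall fun s hs => ?_
    rw [Set.uIoc_of_le (by norm_num)] at hs
    have h0 := T_nonneg hs.1.le hs.2
    simpa using (tendsto_pow_atTop_nhds_zero_of_lt_one h0 (T_lt hs.1)).mul_const (s^(2*k))

lemma inv_tendsto : Tendsto (fun k : ℕ => 1 / (2*(k:ℝ)+1)) atTop (𝓝 0) := by
  simp_rw [one_div]
  apply Tendsto.inv_tendsto_atTop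
  apply tendsto_atTop_add_const_right
  exact tendsto_natCast_atTop_atTop.const_mul_atTop (by norm_num)

lemma inv2_tendsto : Tendsto (fun k : ℕ => 1 / (2*(k:ℝ)+1)^2) atTop (𝓝 0) := by
  simpa [div_pow] using inv_tendsto.pow 2

lemma I_tendsto_k (n : ℕ) : Tendsto (fun k => I n k) atTop (𝓝 0) :=
  squeeze_zero (fun k => I_nonneg n k) (fun k => I_le n k) inv_tendsto

/-- column sums -/
lemma colsum (n : ℕ) : HasSum (fun k => I (n+1) k) ((I n 0 + I (n+1) 0)/2) := by
  refine tele (x := fun k => (I n k + I (n+1) k)/2) (fun k => I_nonneg _ _) ?_ ?_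
  · intro k
    have := R2 n k
    linarith
  · simpa using ((I_tendsto_k n).add (I_tendsto_k (n+1))).div_const 2

noncomputable def b (i : ℕ) : ℝ := 2 * (I (2*i+1) 0 + I (2*i+2) 0)

lemma b_nonneg (i : ℕ) : 0 ≤ b i := by
  have := I_nonneg (2*i+1) 0
  have := I_nonneg (2*i+2) 0
  unfold b; positivity

lemma b_succ (i : ℕ) : (2*(i:ℝ)+3) * b (i+1) = (2*i+2) * b i := by
  have h1 := F1 (2*i+1) 0
  have h2 := F1 (2*i+2) 0
  unfold b
  rw [show 2*(i+1)+1 = 2*i+3 by ring, show 2*(i+1)+2 = 2*i+4 by ring]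
  push_cast at h1 h2
  simp only [show 2*i+1+2 = 2*i+3 by ring, show 2*i+1+1 = 2*i+2 by ring, show 2*i+2+2 = 2*i+4 by ring] at h1 h2
  linear_combination (-2) * h1 - 2 * h2

lemma b_eq (i : ℕ) : b i = 4^(i+1) / ((Nat.choose (2*(i+1)) (i+1) : ℝ) * ((i:ℝ)+1)) := by
  induction i with
  | zero =>
    have h := F1 0 0
    have h0 := I_zero 0
    simp at h h0
    norm_num [b, Nat.choose]
    linarith
  | succ i ih =>
    have h := b_succ i
    have hc := Nat.succ_mul_centralBinom_succ (i+1)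
    simp only [Nat.centralBinom] at hc
    have hc' : ((i:ℝ)+2) * (Nat.choose (2*(i+1+1)) (i+1+1) : ℝ)
        = 2 * (2*(i+1)+1) * (Nat.choose (2*(i+1)) (i+1) : ℝ) := by
      have := congrArg (Nat.cast : ℕ → ℝ) hc
      push_cast at this
      linarith
    have p1 : (0:ℝ) < (Nat.choose (2*(i+1)) (i+1) : ℝ) := by
      exact_mod_cast Nat.choose_pos (by omega)
    have p2 : (0:ℝ) < (Nat.choose (2*(i+1+1)) (i+1+1) : ℝ) := by
      exact_mod_cast Nat.choose_pos (by omega)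
    set A := (Nat.choose (2*(i+1)) (i+1) : ℝ)
    set B := (Nat.choose (2*(i+1+1)) (i+1+1) : ℝ)
    rw [ih] at h
    have hB : B = 2 * (2*(i+1)+1) * A / (i+2) := by
      field_simp; linarith
    have hb : b (i+1) = (2*i+2) * (4^(i+1) / (A * (i+1))) / (2*i+3) := by
      field_simp
      field_simp at h
      linarith
    rw [hb, hB]
    push_cast
    field_simp
    ring

lemma b_sum (i : ℕ) : HasSum (fun k => 4 * I (2*i+2) k) (b i) := by
  refine hsc ((colsum (2*i+1)).mul_left 4) (fun k => rfl) ?_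
  unfold b; ring

lemma b_tendsto : Tendsto b atTop (𝓝 0) := by
  have h1 : Tendsto (fun i : ℕ => 2*i+1) atTop atTop :=
    tendsto_atTop_mono (fun i => by simp only [id]; omega) tendsto_id
  have h2 : Tendsto (fun i : ℕ => 2*i+2) atTop atTop :=
    tendsto_atTop_mono (fun i => by simp only [id]; omega) tendsto_id
  unfold b
  simpa using (((I_tendsto 0).comp h1).add ((I_tendsto 0).comp h2)).const_mul 2

noncomputable def w (i : ℕ) : ℝ := b i / (i+1)

lemma w_nonneg (i : ℕ) : 0 ≤ w i := div_nonneg (b_nonneg i) (by positivity)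

lemma w_sum (i : ℕ) :
    HasSum (fun k : ℕ => 8/(2*(k:ℝ)+1) * (I (2*i+1) k - I (2*i+3) k)) (w i) := by
  refine hsc ((b_sum i).div_const ((i:ℝ)+1)) (fun k => ?_) rfl
  have := F1 (2*i+1) k
  push_cast at this
  simp only [show 2*i+1+2 = 2*i+3 by ring, show 2*i+1+1 = 2*i+2 by ring] at this
  field_simp
  linarith

lemma w_split (i : ℕ) : w i / (2*i+3) + 2 * (b i - b (i+1)) = w i := by
  have := b_succ i
  have : b (i+1) = (2*i+2) * b i / (2*i+3) := by field_simp; linarith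
  rw [this]; unfold w
  field_simp
  ring

lemma oddsum (k : ℕ) : HasSum (fun j : ℕ => I (2*j+1) k / (2*j+1)) (1/(2*k+1)^2) := by
  have h : Tendsto (fun j : ℕ => 2*j) atTop atTop :=
    tendsto_atTop_mono (fun i => by simp only [id]; omega) tendsto_id
  refine hsc (tele (f := fun j : ℕ => I (2*j+1) k / (2*j+1))
    (x := fun j => I (2*j) k / (2*k+1)) ?_ ?_ ?_) (fun _ => rfl) ?_
  rotate_left 3
  · simp [I_zero]; field_simp
  · intro j; exact div_nonneg (I_nonneg _ _) (by positivity)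
  · intro j
    have := F1 (2*j) k
    push_cast at this
    simp only [show 2*(j+1) = 2*j+2 by ring]
    field_simp
    linarith
  · simpa using ((I_tendsto k).comp h).div_const (2*(k:ℝ)+1)

noncomputable def H (k : ℕ) : ℝ := ∑' j : ℕ, I (2*j+2) k / (2*j+1)

lemma H_term_le (j k : ℕ) : I (2*j+2) k / (2*j+1) ≤ I (2*j+1) k / (2*j+1) := by
  have := I_anti (2*j+1) k
  gcongr

lemma H_term_nonneg (j k : ℕ) : 0 ≤ I (2*j+2) k / (2*j+1) :=
  div_nonneg (I_nonneg _ _) (by positivity)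

lemma H_sum (k : ℕ) : HasSum (fun j : ℕ => I (2*j+2) k / (2*j+1)) (H k) :=
  (Summable.of_nonneg_of_le (fun j => H_term_nonneg j k) (fun j => H_term_le j k)
    (oddsum k).summable).hasSum

lemma H_nonneg (k : ℕ) : 0 ≤ H k := tsum_nonneg fun j => H_term_nonneg j k

lemma H_le (k : ℕ) : H k ≤ 1/(2*k+1)^2 :=
  hasSum_le (fun j => H_term_le j k) (H_sum k) (oddsum k)

lemma H_tendsto : Tendsto H atTop (𝓝 0) :=
  squeeze_zero H_nonneg H_le inv2_tendsto

lemma H_rec (k : ℕ) : H k + H (k+1) = 1/(2*k+1)^2 - 1/(2*(k+1)+1)^2 := by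
  have h1 := (H_sum k).add (H_sum (k+1))
  have h2 := (oddsum k).sub (oddsum (k+1))
  push_cast at h2
  refine h1.unique ?_
  refine hsc h2 (fun j => ?_) rfl
  have := R2 (2*j+1) k
  simp only [show 2*j+1+1 = 2*j+2 by ring] at this
  rw [← add_div, ← sub_div, this]

noncomputable def g (k : ℕ) : ℝ := (-1)^k / (2*(k:ℝ)+1)^2

lemma sum_inv2 : Summable (fun k : ℕ => 1/(2*(k:ℝ)+1)^2) := by
  refine Summable.of_nonneg_of_le (fun k => by positivity) (fun k => ?_)
    ((summable_nat_add_iff 1).2 (Real.summable_one_div_nat_pow.2 (by norm_num : 1 < 2)))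
  push_cast
  gcongr
  have : (0:ℝ) ≤ k := by positivity
  linarith

lemma g_summable : Summable g := by
  refine Summable.of_norm ?_
  convert sum_inv2 using 1
  ext k
  simp [g]

noncomputable def R (k : ℕ) : ℝ := ∑' j, g (j + k)

lemma R_succ (k : ℕ) : R k = g k + R (k+1) := by
  unfold R
  rw [((summable_nat_add_iff k).2 g_summable).tsum_eq_zero_add]
  simp only [zero_add]
  congr 2
  ext j
  congr 1
  ring

lemma R_tendsto : Tendsto R atTop (𝓝 0) := tendsto_sum_nat_add g

lemma E_eq (k : ℕ) : (-1)^k * H k = R k + R (k+1) := by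
  have hstep : ∀ k, (-1)^k * H k - R k - R (k+1)
      = (-1)^(k+1) * H (k+1) - R (k+1) - R (k+2) := by
    intro k
    have h1 := R_succ k
    have h2 := R_succ (k+1)
    have h3 := H_rec k
    have h4 : g k + g (k+1) = (-1)^k * (1/(2*k+1)^2 - 1/(2*(k+1)+1)^2) := by
      unfold g; push_cast; ring
    rw [← h3] at h4
    rw [pow_succ]
    linear_combination -h1 - h2 - h4
  have hc : ∀ n, (-1)^k * H k - R k - R (k+1)
      = (-1)^(n+k) * H (n+k) - R (n+k) - R (n+k+1) := by
    intro n
    induction n with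
    | zero => simp
    | succ n ih =>
      rw [ih, hstep, show n+1+k = n+k+1 by ring]
  have ht : Tendsto (fun n => (-1)^n * H n - R n - R (n+1)) atTop (𝓝 0) := by
    have h1 : Tendsto (fun n => (-1)^n * H n) atTop (𝓝 0) := by
      rw [tendsto_zero_iff_abs_tendsto_zero]
      convert H_tendsto using 1
      ext n
      simp [abs_mul, abs_of_nonneg (H_nonneg n)]
    simpa using (h1.sub R_tendsto).sub (R_tendsto.comp (tendsto_add_atTop_nat 1))
  have ht' := ht.comp (tendsto_add_atTop_nat k)
  have : (-1)^k * H k - R k - R (k+1) = 0 := by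
    refine tendsto_nhds_unique ?_ ht'
    refine tendsto_const_nhds.congr fun n => ?_
    exact hc n
  linarith

lemma sum_HG2 : HasSum (fun k : ℕ => H k / (2*k+1)^2) (R 0 ^ 2) := by
  refine tele (x := fun k => R k ^ 2) (fun k => div_nonneg (H_nonneg k) (by positivity)) ?_ ?_
  · intro k
    have h1 := E_eq k
    have h2 : R k - R (k+1) = g k := by rw [R_succ k]; ring
    have h3 : ((-1:ℝ)^k)^2 = 1 := by rw [← pow_mul, mul_comm, pow_mul]; simp
    have : R k ^ 2 - R (k+1)^2 = (R k + R (k+1)) * (R k - R (k+1)) := by ring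
    rw [this, ← h1, h2]
    unfold g
    rw [show (-1)^k * H k * ((-1)^k / (2*(k:ℝ)+1)^2) = ((-1:ℝ)^k)^2 * (H k / (2*(k:ℝ)+1)^2) by ring, h3]
    ring
  · simpa using R_tendsto.pow 2

lemma sum_HG : HasSum H (R 0) := by
  have h := tele (f := H) (x := fun k => (H k + 1/(2*(k:ℝ)+1)^2)/2) H_nonneg ?_ ?_
  · refine hsc h (fun _ => rfl) ?_
    have h1 := E_eq 0
    have h2 := R_succ 0
    simp [g] at h1 h2
    simp
    linarith
  · intro k
    have := H_rec k
    push_cast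
    linarith
  · simpa using (H_tendsto.add inv2_tendsto).div_const 2

lemma zeta_odd : HasSum (fun k : ℕ => 8/(2*(k:ℝ)+1)^3) (7 * ∑' n : ℕ, 1 / ((n : ℝ) + 1) ^ 3) := by
  have hs : Summable (fun n : ℕ => 1 / ((n : ℝ) + 1) ^ 3) := by
    simpa using ((summable_nat_add_iff 1).2 (Real.summable_one_div_nat_pow.2 (by norm_num : 1 < 3)))
  set Z := ∑' n : ℕ, 1 / ((n : ℝ) + 1) ^ 3 with hZ
  have he : Summable (fun k : ℕ => 1 / (((2*k : ℕ) : ℝ) + 1)^3) :=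
    hs.comp_injective (i := fun k => 2*k) (fun a b h => by simpa using h)
  have ho : HasSum (fun k : ℕ => 1 / (((2*k+1 : ℕ) : ℝ) + 1)^3) (Z/8) := by
    refine hsc (hs.hasSum.div_const 8) (fun k => ?_) rfl
    push_cast
    field_simp
    ring
  have := (he.hasSum.even_add_odd (f := fun n : ℕ => 1 / ((n : ℝ) + 1) ^ 3) ho).unique hs.hasSum
  have h8 := he.hasSum.mul_left 8
  refine hsc h8 (fun k => ?_) ?_
  · push_cast; ring
  · linarith

open ENNReal in
lemma etsum {f : ℕ → ℝ} {a : ℝ} (hf : ∀ k, 0 ≤ f k) (h : HasSum f a) :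
    ∑' k, ENNReal.ofReal (f k) = ENNReal.ofReal a := by
  rw [← ENNReal.ofReal_tsum_of_nonneg hf h.summable, h.tsum_eq]

lemma etele {x : ℕ → ℝ} {c : ℝ} (hc : 0 ≤ c) (hx : ∀ k, x (k+1) ≤ x k)
    (h : Tendsto x atTop (𝓝 0)) (j : ℕ) :
    ∑' p, ENNReal.ofReal (c * (x (j+p) - x (j+p+1))) = ENNReal.ofReal (c * x j) := by
  have h0 : ∀ p, 0 ≤ c * (x (j+p) - x (j+p+1)) :=
    fun p => mul_nonneg hc (sub_nonneg.2 (hx _))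
  refine etsum h0 ?_
  refine hsc (tele h0 (x := fun p => c * x (j+p)) (fun p => by
    rw [show j + (p+1) = j+p+1 by ring]; ring) ?_) (fun _ => rfl) (by simp)
  have := (h.comp (tendsto_add_atTop_nat j)).const_mul c
  simpa [Function.comp_def, add_comm] using this

/-- odd-index sequence -/
noncomputable def X (k m : ℕ) : ℝ := I (2*m+1) k
/-- even-index sequence -/
noncomputable def Y (k m : ℕ) : ℝ := I (2*m+2) k

lemma X_anti (k m : ℕ) : X k (m+1) ≤ X k m := (I_anti (2*m+2) k).trans (I_anti (2*m+1) k)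
lemma Y_anti (k m : ℕ) : Y k (m+1) ≤ Y k m := (I_anti (2*m+3) k).trans (I_anti (2*m+2) k)

lemma X_tendsto (k : ℕ) : Tendsto (X k) atTop (𝓝 0) :=
  (I_tendsto k).comp (tendsto_atTop_mono (fun i => by simp only [id]; omega) tendsto_id :
    Tendsto (fun i : ℕ => 2*i+1) atTop atTop)
lemma Y_tendsto (k : ℕ) : Tendsto (Y k) atTop (𝓝 0) :=
  (I_tendsto k).comp (tendsto_atTop_mono (fun i => by simp only [id]; omega) tendsto_id :
    Tendsto (fun i : ℕ => 2*i+2) atTop atTop)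

lemma X_nonneg (k m : ℕ) : 0 ≤ X k m := I_nonneg _ _
lemma Y_nonneg (k m : ℕ) : 0 ≤ Y k m := I_nonneg _ _

lemma b_anti (i : ℕ) : b (i+1) ≤ b i := by
  have h1 := b_succ i
  have h2 := b_nonneg i
  have : b (i+1) = (2*i+2) * b i / (2*i+3) := by field_simp; linarith
  rw [this, div_le_iff₀ (by positivity)]
  nlinarith

/-- w expanded over k -/
lemma ew {c : ℝ} (hc : 0 ≤ c) (i : ℕ) :
    ENNReal.ofReal (c * w i) = ∑' k : ℕ, ENNReal.ofReal (c * (8/(2*(k:ℝ)+1)) * (X k i - X k (i+1))) := by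
  symm
  refine etsum (fun k => ?_) (hsc ((w_sum i).mul_left c) (fun k => ?_) rfl)
  · have := sub_nonneg.2 (X_anti k i)
    positivity
  · simp only [X, show 2*(i+1)+1 = 2*i+3 by ring]; ring

/-- tail sum of w -/
lemma ewt {c : ℝ} (hc : 0 ≤ c) (m : ℕ) :
    ∑' q, ENNReal.ofReal (c * w (m+q)) = ∑' k : ℕ, ENNReal.ofReal (c * (8/(2*(k:ℝ)+1)) * X k m) := by
  simp_rw [ew hc]
  rw [ENNReal.tsum_comm]
  refine tsum_congr fun k => ?_
  exact etele (by positivity) (X_anti k) (X_tendsto k) m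

noncomputable def cc (j p : ℕ) : ℝ := 1 / ((2*((j:ℝ)+p)+3) * (2*j+1))

lemma cc_nonneg (j p : ℕ) : 0 ≤ cc j p := by unfold cc; positivity

lemma part1 : ∑' j : ℕ, ∑' p : ℕ, ∑' k : ℕ,
    ENNReal.ofReal (cc j p * (8/(2*(k:ℝ)+1)) * X k (j+p+1)) = ENNReal.ofReal (8 * R 0 ^ 2) := by
  have e : ∀ j p k : ℕ, cc j p * (8/(2*(k:ℝ)+1)) * X k (j+p+1)
      = (8/(2*(k:ℝ)+1)^2/(2*j+1)) * (Y k (j+p) - Y k (j+p+1)) := by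
    intro j p k
    have := F1 (2*(j+p)+2) k
    push_cast at this
    simp only [X, Y, cc, show 2*(j+p+1)+1 = 2*(j+p)+2+1 by ring,
      show 2*(j+p+1)+2 = 2*(j+p)+2+2 by ring]
    have h : I (2*(j+p)+2+1) k = (2*((j:ℝ)+p)+3) * (I (2*(j+p)+2) k - I (2*(j+p)+2+2) k) / (2*k+1) := by
      field_simp; linarith
    rw [h]
    field_simp
  simp_rw [e]
  have s1 : ∀ j : ℕ, ∑' p : ℕ, ∑' k : ℕ, ENNReal.ofReal ((8/(2*(k:ℝ)+1)^2/(2*j+1)) * (Y k (j+p) - Y k (j+p+1)))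
      = ∑' k : ℕ, ENNReal.ofReal ((8/(2*(k:ℝ)+1)^2/(2*j+1)) * Y k j) := by
    intro j
    rw [ENNReal.tsum_comm]
    exact tsum_congr fun k => etele (by positivity) (Y_anti k) (Y_tendsto k) j
  simp_rw [s1]
  rw [ENNReal.tsum_comm]
  have s2 : ∀ k : ℕ, ∑' j : ℕ, ENNReal.ofReal ((8/(2*(k:ℝ)+1)^2/(2*j+1)) * Y k j)
      = ENNReal.ofReal (8 * (H k / (2*k+1)^2)) := by
    intro k
    refine etsum (fun j => mul_nonneg (by positivity) (Y_nonneg _ _))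
      (hsc ((H_sum k).mul_left (8/(2*(k:ℝ)+1)^2)) (fun j => ?_) (by ring))
    simp only [Y]; ring
  simp_rw [s2]
  exact etsum (fun k => by have := H_nonneg k; positivity) (sum_HG2.mul_left 8)

lemma part2b : ∑' j : ℕ, ∑' p : ℕ, ENNReal.ofReal (2/(2*(j:ℝ)+1) * (b (j+p) - b (j+p+1)))
    = ENNReal.ofReal (8 * R 0) := by
  have s1 : ∀ j : ℕ, ∑' p : ℕ, ENNReal.ofReal (2/(2*(j:ℝ)+1) * (b (j+p) - b (j+p+1)))
      = ∑' k : ℕ, ENNReal.ofReal (8 * (Y k j / (2*(j:ℝ)+1))) := by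
    intro j
    rw [etele (by positivity) b_anti b_tendsto j]
    symm
    refine etsum (fun k => by have := Y_nonneg k j; positivity)
      (hsc ((b_sum j).mul_left (2/(2*(j:ℝ)+1))) (fun k => ?_) rfl)
    simp only [Y]; ring
  simp_rw [s1]
  rw [ENNReal.tsum_comm]
  have s2 : ∀ k : ℕ, ∑' j : ℕ, ENNReal.ofReal (8 * (Y k j / (2*(j:ℝ)+1)))
      = ENNReal.ofReal (8 * H k) := by
    intro k
    exact etsum (fun j => by have := Y_nonneg k j; positivity) ((H_sum k).mul_left 8)
  simp_rw [s2]
  exact etsum (fun k => by have := H_nonneg k; positivity) (sum_HG.mul_left 8)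

lemma part2c : ∑' j : ℕ, ∑' p : ℕ, ENNReal.ofReal (1/(2*(j:ℝ)+1) * w (j+p))
    = ENNReal.ofReal (7 * ∑' n : ℕ, 1 / ((n : ℝ) + 1) ^ 3) := by
  have s1 : ∀ j : ℕ, ∑' p : ℕ, ENNReal.ofReal (1/(2*(j:ℝ)+1) * w (j+p))
      = ∑' k : ℕ, ENNReal.ofReal (1/(2*(j:ℝ)+1) * (8/(2*(k:ℝ)+1)) * X k j) :=
    fun j => ewt (by positivity) j
  simp_rw [s1]
  rw [ENNReal.tsum_comm]
  have s2 : ∀ k : ℕ, ∑' j : ℕ, ENNReal.ofReal (1/(2*(j:ℝ)+1) * (8/(2*(k:ℝ)+1)) * X k j)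
      = ENNReal.ofReal (8/(2*(k:ℝ)+1)^3) := by
    intro k
    refine etsum (fun j => by have := X_nonneg k j; positivity)
      (hsc ((oddsum k).mul_left (8/(2*(k:ℝ)+1))) (fun j => ?_) ?_)
    · simp only [X]; ring
    · field_simp
  simp_rw [s2]
  exact etsum (fun k => by positivity) zeta_odd

lemma part2 : ∑' j : ℕ, ∑' p : ℕ, ENNReal.ofReal (cc j p * w (j+p)) + ENNReal.ofReal (8 * R 0)
    = ENNReal.ofReal (7 * ∑' n : ℕ, 1 / ((n : ℝ) + 1) ^ 3) := by
  rw [← part2b, ← part2c, ← ENNReal.tsum_add]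
  refine tsum_congr fun j => ?_
  rw [← ENNReal.tsum_add]
  refine tsum_congr fun p => ?_
  have h1 := sub_nonneg.2 (b_anti (j+p))
  rw [← ENNReal.ofReal_add (mul_nonneg (cc_nonneg _ _) (w_nonneg _)) (by positivity)]
  congr 1
  rw [← w_split (j+p)]
  have := w_split (j+p)
  have hw : w (j+p) / (2*((j+p:ℕ):ℝ)+3) = w (j+p) - 2 * (b (j+p) - b (j+p+1)) := by linarith
  have hcc : cc j p * w (j+p) = 1/(2*(j:ℝ)+1) * (w (j+p) / (2*((j+p:ℕ):ℝ)+3)) := by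
    unfold cc; push_cast; field_simp
  rw [w_split, hcc, hw]
  ring

lemma total : ∑' j : ℕ, ∑' p : ℕ, ∑' q : ℕ, ENNReal.ofReal (cc j p * w (j+p+q))
      + ENNReal.ofReal (8 * R 0)
    = ENNReal.ofReal (8 * R 0 ^ 2) + ENNReal.ofReal (7 * ∑' n : ℕ, 1 / ((n : ℝ) + 1) ^ 3) := by
  rw [← part2, ← part1, ← add_assoc, ← ENNReal.tsum_add]
  congr 1
  refine tsum_congr fun j => ?_
  rw [← ENNReal.tsum_add]
  refine tsum_congr fun p => ?_
  rw [ewt (cc_nonneg j p), ew (cc_nonneg j p), ← ENNReal.tsum_add]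
  refine tsum_congr fun k => ?_
  have h1 := sub_nonneg.2 (X_anti k (j+p))
  have h2 := X_nonneg k (j+p+1)
  have h3 := cc_nonneg j p
  rw [← ENNReal.ofReal_add (by positivity) (by positivity)]
  congr 1
  ring

/-- reindexing -/
def eqv : ℕ × ℕ × ℕ ≃ {p : ℕ × ℕ × ℕ // p.2.2 ≤ p.2.1 ∧ p.2.1 ≤ p.1 ∧ 1 ≤ p.2.2} where
  toFun x := ⟨(x.1 + x.2.1 + x.2.2 + 1, x.1 + x.2.1 + 1, x.1 + 1), by
    refine ⟨?_, ?_, ?_⟩ <;> simp only <;> omega⟩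
  invFun p := (p.1.2.2 - 1, p.1.2.1 - p.1.2.2, p.1.1 - p.1.2.1)
  left_inv x := by
    obtain ⟨a, b, c⟩ := x
    simp only [Prod.mk.injEq]
    omega
  right_inv p := by
    obtain ⟨⟨a, b, c⟩, h⟩ := p
    simp only at h
    simp only [Subtype.mk.injEq, Prod.mk.injEq]
    omega

lemma R0_nonneg : 0 ≤ R 0 := sum_HG.nonneg H_nonneg

lemma final (F : ℕ × ℕ × ℕ → ℝ) (hF : ∀ j p q, F (j,p,q) = cc j p * w (j+p+q)) :
    ∑' x, F x = 7 * (∑' n : ℕ, 1 / ((n : ℝ) + 1) ^ 3) + 8 * R 0 ^ 2 - 8 * R 0 := by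
  have h0 : ∀ x, 0 ≤ F x := by
    rintro ⟨j, p, q⟩
    rw [hF]
    exact mul_nonneg (cc_nonneg _ _) (w_nonneg _)
  have ht := total
  have hE : ∑' x, ENNReal.ofReal (F x) =
      ∑' j : ℕ, ∑' p : ℕ, ∑' q : ℕ, ENNReal.ofReal (cc j p * w (j+p+q)) := by
    rw [ENNReal.tsum_prod']
    refine tsum_congr fun j => ?_
    rw [ENNReal.tsum_prod']
    simp_rw [hF]
  have hz : 0 ≤ 7 * ∑' n : ℕ, 1 / ((n : ℝ) + 1) ^ 3 :=
    mul_nonneg (by norm_num) (tsum_nonneg fun n => by positivity)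
  have hR := R0_nonneg
  rw [← hE, ← ENNReal.ofReal_add (by positivity) hz] at ht
  have hfin : ∑' x, ENNReal.ofReal (F x) ≠ ⊤ := by
    intro h
    rw [h, top_add] at ht
    exact ENNReal.ofReal_ne_top ht.symm
  have hr : ∑' x, F x = (∑' x, ENNReal.ofReal (F x)).toReal := by
    rw [ENNReal.tsum_toReal_eq (fun _ => ENNReal.ofReal_ne_top)]
    exact tsum_congr fun x => (ENNReal.toReal_ofReal (h0 x)).symm
  have h := congrArg ENNReal.toReal ht
  rw [ENNReal.toReal_add hfin ENNReal.ofReal_ne_top, ENNReal.toReal_ofReal (by positivity),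
    ENNReal.toReal_ofReal (by positivity), ← hr] at h
  linarith

end S16

/-- `∑_{n₁ ≥ n₂ ≥ n₃ ≥ 1} 4^{n₁}/(binom(2n₁,n₁) n₁² (2n₂+1)(2n₃−1))
  = 7ζ(3) + 8G² − 8G`. -/
theorem stmt16 :
    (∑' p : {p : ℕ × ℕ × ℕ // p.2.2 ≤ p.2.1 ∧ p.2.1 ≤ p.1 ∧ 1 ≤ p.2.2},
      (4 : ℝ) ^ p.1.1 /
        ((Nat.choose (2 * p.1.1) p.1.1 : ℝ) * (p.1.1 : ℝ) ^ 2 *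
          (2 * (p.1.2.1 : ℝ) + 1) * (2 * (p.1.2.2 : ℝ) - 1))) =
    7 * (∑' n : ℕ, 1 / ((n : ℝ) + 1) ^ 3) +
      8 * (∑' k : ℕ, (-1 : ℝ) ^ k / (2 * (k : ℝ) + 1) ^ 2) ^ 2 -
      8 * (∑' k : ℕ, (-1 : ℝ) ^ k / (2 * (k : ℝ) + 1) ^ 2) := by
  have hG : (∑' k : ℕ, (-1 : ℝ) ^ k / (2 * (k : ℝ) + 1) ^ 2) = S16.R 0 := rfl
  rw [hG, ← S16.eqv.tsum_eq]
  apply S16.final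
  intro j p q
  simp only [S16.eqv, Equiv.coe_fn_mk, S16.cc, S16.w, S16.b_eq]
  have p1 : (0:ℝ) < (Nat.choose (2*(j+p+q+1)) (j+p+q+1) : ℝ) := by
    exact_mod_cast Nat.choose_pos (by omega)
  have e1 : 2 * (((j+p+1 : ℕ)) : ℝ) + 1 = 2*((j:ℝ)+p)+3 := by push_cast; ring
  have e2 : 2 * (((j+1 : ℕ)) : ℝ) - 1 = 2*(j:ℝ)+1 := by push_cast; ring
  have e3 : (((j+p+q+1 : ℕ)) : ℝ) = ((j+p+q : ℕ):ℝ)+1 := by push_cast; ring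
  rw [e1, e2, e3]
  field_simp
end

section
/- We have ∑_{n₁ > n₂ ≥ n₃ ≥ 1} 4^{n₁} / (binom(2n₁, n₁) · n₁² · (2n₂+1) · (2n₃−1)) = 8G², where G = ∑_{k=0}^∞ (−1)^k/(2k+1)² is Catalan's constant and the triple sum is over integers n₁ > n₂ ≥ n₃ ≥ 1. -/
open Real

noncomputable def uu (n : ℕ) : ℝ := 4 ^ n / (Nat.choose (2 * n) n : ℝ)

open MeasureTheory Filter Topology Set

lemma uu_zero : uu 0 = 1 := by simp [uu]

lemma uu_pos (n : ℕ) : 0 < uu n := by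
  unfold uu
  have : 0 < Nat.choose (2 * n) n := Nat.choose_pos (by omega)
  positivity

lemma uu_succ (n : ℕ) : uu (n + 1) = uu n * (2 * n + 2) / (2 * n + 1) := by
  have h := Nat.succ_mul_centralBinom_succ n
  unfold Nat.centralBinom at h
  have h' : ((n : ℝ) + 1) * (Nat.choose (2 * (n + 1)) (n + 1) : ℝ)
      = 2 * (2 * n + 1) * (Nat.choose (2 * n) n : ℝ) := by exact_mod_cast h
  have h1 : (0 : ℝ) < Nat.choose (2 * n) n := by
    exact_mod_cast Nat.choose_pos (by omega)
  have h2 : (0 : ℝ) < Nat.choose (2 * (n + 1)) (n + 1) := by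
    exact_mod_cast Nat.choose_pos (by omega)
  unfold uu
  rw [div_eq_div_iff h2.ne' (by positivity)]
  field_simp
  rw [pow_succ]
  linear_combination (-4 ^ n * 2) * h'

lemma uu_le (n : ℕ) : uu n ≤ 2 * n + 1 := by
  induction n with
  | zero => simp [uu_zero]
  | succ n ih =>
    rw [uu_succ, div_le_iff₀ (by positivity)]
    push_cast
    nlinarith [uu_pos n]

lemma uu_sq_le (n : ℕ) : (uu n / (2 * n + 1)) ^ 2 ≤ 1 / (n + 1) := by
  induction n with
  | zero => simp [uu_zero]
  | succ n ih =>
    have e : uu (n + 1) / (2 * ((n + 1 : ℕ) : ℝ) + 1)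
        = (uu n / (2 * n + 1)) * ((2 * n + 2) / (2 * n + 3)) := by
      rw [uu_succ]; push_cast; field_simp; ring
    rw [e, mul_pow]
    calc _ ≤ 1 / ((n : ℝ) + 1) * ((2 * n + 2) / (2 * n + 3)) ^ 2 := by gcongr
      _ ≤ _ := by
        push_cast
        rw [div_pow, div_mul_div_comm, div_le_div_iff₀ (by positivity) (by positivity)]
        have : (0 : ℝ) ≤ n := by positivity
        nlinarith

lemma uu_tendsto : Tendsto (fun n : ℕ => uu n / (2 * n + 1)) atTop (𝓝 0) := by
  have h1 : Tendsto (fun n : ℕ => (uu n / (2 * n + 1)) ^ 2) atTop (𝓝 0) :=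
    squeeze_zero (fun n => by positivity) uu_sq_le tendsto_one_div_add_atTop_nhds_zero_nat
  have h2 := (Real.continuous_sqrt.tendsto 0).comp h1
  simp only [Real.sqrt_zero] at h2
  refine h2.congr fun n => ?_
  simp only [Function.comp]
  rw [Real.sqrt_sq]
  have := uu_pos n
  positivity

lemma hasSum_telescope {a : ℕ → ℝ} (h0 : Tendsto a atTop (𝓝 0)) {f : ℕ → ℝ}
    (hf : ∀ n, f n = a n - a (n + 1)) (hn : ∀ n, 0 ≤ f n) (k : ℕ) :
    HasSum (fun b => f (k + b)) (a k) := by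
  rw [hasSum_iff_tendsto_nat_of_nonneg (fun i => hn _)]
  have e : ∀ n, ∑ i ∈ Finset.range n, f (k + i) = a k - a (k + n) := by
    intro n
    induction n with
    | zero => simp
    | succ n ih => rw [Finset.sum_range_succ, ih, hf]; ring_nf
  simp_rw [e]
  have := (h0.comp (tendsto_add_atTop_nat k)).const_sub (a k)
  simp only [sub_zero] at this
  refine this.congr fun n => ?_
  simp [add_comm]

noncomputable def JJ (m : ℕ) : ℝ := ∫ t in (0 : ℝ)..(π / 2), (π / 2 - t) * sin t ^ (2 * m)

lemma JJ_rec (m : ℕ) : (2 * m + 1) * JJ m - (2 * m + 2) * JJ (m + 1) = 1 / (2 * m + 2) := by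
  have hd : ∀ t ∈ uIcc (0 : ℝ) (π / 2), HasDerivAt
      (fun t => (π / 2 - t) * (cos t * sin t ^ (2 * m + 1)) + 1 / (2 * m + 2) * sin t ^ (2 * m + 2))
      ((2 * m + 1) * ((π / 2 - t) * sin t ^ (2 * m)) -
        (2 * m + 2) * ((π / 2 - t) * sin t ^ (2 * (m + 1)))) t := by
    intro t _
    have h1 := ((hasDerivAt_const t (π / 2)).sub (hasDerivAt_id t)).mul
      ((hasDerivAt_cos t).mul ((hasDerivAt_sin t).pow (2 * m + 1)))
    have h2 := ((hasDerivAt_sin t).pow (2 * m + 2)).const_mul (1 / (2 * (m : ℝ) + 2))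
    refine (h1.add h2).congr_deriv ?_
    simp only [Pi.sub_apply, Pi.mul_apply, Pi.pow_apply, id]
    have e1 : 2 * m + 1 - 1 = 2 * m := by omega
    have e2 : 2 * m + 2 - 1 = 2 * m + 1 := by omega
    rw [e1, e2]
    push_cast
    have hc : cos t ^ 2 = 1 - sin t ^ 2 := by rw [← sin_sq_add_cos_sq t]; ring
    field_simp
    ring_nf
    rw [hc]
    ring
  have hi1 : IntervalIntegrable (fun t => (2 * (m : ℝ) + 1) * ((π / 2 - t) * sin t ^ (2 * m)))
    volume 0 (π / 2) := (by fun_prop : Continuous _).intervalIntegrable _ _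
  have hi2 : IntervalIntegrable (fun t => (2 * (m : ℝ) + 2) * ((π / 2 - t) * sin t ^ (2 * (m + 1))))
    volume 0 (π / 2) := (by fun_prop : Continuous _).intervalIntegrable _ _
  have := intervalIntegral.integral_eq_sub_of_hasDerivAt hd (hi1.sub hi2)
  rw [intervalIntegral.integral_sub hi1 hi2, intervalIntegral.integral_const_mul,
    intervalIntegral.integral_const_mul] at this
  unfold JJ
  rw [this]
  simp

lemma JJ_nonneg (m : ℕ) : 0 ≤ JJ m := by
  apply intervalIntegral.integral_nonneg (by positivity)
  intro t ht
  have := ht.2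
  have := sin_nonneg_of_nonneg_of_le_pi ht.1 (by linarith [pi_pos])
  have : 0 ≤ π / 2 - t := by linarith
  positivity

lemma JJ_le (m : ℕ) : JJ m ≤ π / 2 * (1 / (2 * m + 1)) := by
  have hd : ∀ t ∈ uIcc (0 : ℝ) (π / 2), HasDerivAt
      (fun t => π / 2 * (1 / (2 * m + 1) * sin t ^ (2 * m + 1)))
      (π / 2 * (cos t * sin t ^ (2 * m))) t := by
    intro t _
    have h2 := (((hasDerivAt_sin t).pow (2 * m + 1)).const_mul (1 / (2 * (m : ℝ) + 1))).const_mul (π / 2)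
    refine h2.congr_deriv ?_
    have e1 : 2 * m + 1 - 1 = 2 * m := by omega
    rw [e1]
    push_cast
    field_simp
  have hi : IntervalIntegrable (fun t => π / 2 * (cos t * sin t ^ (2 * m))) volume 0 (π / 2) :=
    (by fun_prop : Continuous _).intervalIntegrable _ _
  have := intervalIntegral.integral_eq_sub_of_hasDerivAt hd hi
  simp at this
  have h3 : JJ m ≤ ∫ t in (0 : ℝ)..(π / 2), π / 2 * (cos t * sin t ^ (2 * m)) := by
    apply intervalIntegral.integral_mono_on (by positivity) _ hi
    · intro t ht
      have hs := sin_nonneg_of_nonneg_of_le_pi ht.1 (by linarith [pi_pos, ht.2])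
      rw [← mul_assoc]
      apply mul_le_mul_of_nonneg_right _ (by positivity)
      have := Real.mul_le_sin (x := π / 2 - t) (by linarith [ht.2]) (by linarith [ht.1])
      rw [sin_pi_div_two_sub] at this
      have hp := pi_pos
      calc π / 2 - t = π / 2 * (2 / π * (π / 2 - t)) := by field_simp
        _ ≤ _ := by gcongr
    · exact (by fun_prop : Continuous _).intervalIntegrable _ _
  refine h3.trans (le_of_eq ?_)
  rw [intervalIntegral.integral_const_mul]
  rw [this, one_div]

lemma hasSum_T (m : ℕ) :
    HasSum (fun c : ℕ => uu (m + c + 1) / ((m + c + 1 : ℕ) : ℝ) ^ 2) (4 * uu m * JJ m) := by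
  have h0 : Tendsto (fun m => 4 * uu m * JJ m) atTop (𝓝 0) := by
    have h := uu_tendsto.const_mul (2 * π)
    simp only [mul_zero] at h
    refine squeeze_zero (fun n => ?_) (fun n => ?_) h
    · have := uu_pos n; have := JJ_nonneg n; positivity
    · calc 4 * uu n * JJ n ≤ 4 * uu n * (π / 2 * (1 / (2 * n + 1))) := by
            have := uu_pos n; gcongr; exact JJ_le n
        _ = _ := by ring
  refine hasSum_telescope (f := fun n => uu (n + 1) / ((n + 1 : ℕ) : ℝ) ^ 2) h0 (fun n => ?_) (fun n => ?_) m
  · have h := JJ_rec n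
    rw [uu_succ]
    push_cast
    have : JJ n = (1 / (2 * n + 2) + (2 * n + 2) * JJ (n + 1)) / (2 * n + 1) := by
      rw [eq_div_iff (by positivity)]; linarith
    rw [this]
    field_simp
    ring
  · have := uu_pos (n + 1); positivity
noncomputable def EE (k : ℕ) (t : ℝ) : ℝ := uu k * ∫ s in (0 : ℝ)..t, sin s ^ (2 * k)

lemma EE_rec (k : ℕ) (t : ℝ) :
    sin t * cos t * (uu k * sin t ^ (2 * k) / (2 * k + 1)) = EE k t - EE (k + 1) t := by
  have h : ∫ s in (0 : ℝ)..t, sin s ^ (2 * k + 2) = _ := integral_sin_pow (2 * k)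
  unfold EE
  rw [show 2 * (k + 1) = 2 * k + 2 by ring, h, uu_succ]
  push_cast
  simp
  field_simp
  ring

lemma sin_lt_one_of {t : ℝ} (h0 : 0 ≤ t) (h : t < π / 2) : sin t < 1 := by
  rw [← sin_pi_div_two]
  exact sin_lt_sin_of_lt_of_le_pi_div_two (by linarith) le_rfl h

lemma EE_nonneg (k : ℕ) {t : ℝ} (h0 : 0 ≤ t) (h : t < π / 2) : 0 ≤ EE k t := by
  unfold EE
  refine mul_nonneg (uu_pos k).le (intervalIntegral.integral_nonneg h0 fun s hs => ?_)
  rw [pow_mul]; positivity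

lemma EE_tendsto {t : ℝ} (h0 : 0 ≤ t) (h : t < π / 2) :
    Tendsto (fun k => EE k t) atTop (𝓝 0) := by
  have hs := sin_lt_one_of h0 h
  have hs0 := sin_nonneg_of_nonneg_of_le_pi h0 (by linarith [pi_pos])
  have hr : sin t ^ 2 < 1 := by nlinarith
  have h1 : Tendsto (fun k : ℕ => (2 * (k * (sin t ^ 2) ^ k) + (sin t ^ 2) ^ k) * t) atTop (𝓝 0) := by
    have a := tendsto_self_mul_const_pow_of_lt_one (by positivity : 0 ≤ sin t ^ 2) hr
    have b := tendsto_pow_atTop_nhds_zero_of_lt_one (by positivity : 0 ≤ sin t ^ 2) hr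
    simpa using ((a.const_mul 2).add b).mul_const t
  refine squeeze_zero (fun k => EE_nonneg k h0 h) (fun k => ?_) h1
  have h2 : ∫ s in (0 : ℝ)..t, sin s ^ (2 * k) ≤ ∫ s in (0 : ℝ)..t, sin t ^ (2 * k) := by
    apply intervalIntegral.integral_mono_on h0
    · exact (by fun_prop : Continuous _).intervalIntegrable _ _
    · exact (by fun_prop : Continuous _).intervalIntegrable _ _
    · intro s hs
      have := sin_nonneg_of_nonneg_of_le_pi hs.1 (by linarith [pi_pos, hs.2])
      have : sin s ≤ sin t := sin_le_sin_of_le_of_le_pi_div_two (by linarith [hs.1, pi_pos]) h.le hs.2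
      gcongr
  rw [intervalIntegral.integral_const] at h2
  simp only [sub_zero, smul_eq_mul] at h2
  unfold EE
  calc _ ≤ (2 * k + 1) * (t * sin t ^ (2 * k)) := by
        have := uu_le k
        have := (uu_pos k).le
        gcongr
        apply intervalIntegral.integral_nonneg h0 fun s hs => ?_
        rw [pow_mul]; positivity
    _ = _ := by rw [pow_mul]; ring

lemma hasSum_E {t : ℝ} (h0 : 0 < t) (h : t < π / 2) (k : ℕ) :
    HasSum (fun b : ℕ => uu (k + b) * sin t ^ (2 * (k + b)) / (2 * ((k + b : ℕ) : ℝ) + 1))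
      (EE k t / (sin t * cos t)) := by
  have hs : 0 < sin t := sin_pos_of_pos_of_lt_pi h0 (by linarith [pi_pos])
  have hc : 0 < cos t := cos_pos_of_mem_Ioo ⟨by linarith, h⟩
  have := hasSum_telescope (EE_tendsto h0.le h) (fun n => EE_rec n t)
    (fun n => by have := uu_pos n; positivity) k
  have := this.div_const (sin t * cos t)
  refine this.congr_fun ?_ |> id
  intro b
  field_simp

lemma hasSum_E0 {t : ℝ} (h0 : 0 < t) (h : t < π / 2) :
    HasSum (fun j : ℕ => uu j * sin t ^ (2 * j) / (2 * (j : ℝ) + 1)) (t / (sin t * cos t)) := by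
  have := hasSum_E h0 h 0
  simpa [EE, uu_zero] using this

lemma hasSum_weight {t : ℝ} (h0 : 0 < t) (h : t < π / 2) {w : ℝ → ℝ} (hw : Continuous w)
    (hw1 : ∀ x, |w x| ≤ 1) :
    HasSum (fun j : ℕ => ∫ s in (0 : ℝ)..t, w s * (uu j * sin s ^ (2 * j) / (2 * (j : ℝ) + 1)))
      (∫ s in (0 : ℝ)..t, w s * (s / (sin s * cos s))) := by
  apply intervalIntegral.hasSum_integral_of_dominated_convergence
    (fun j _ => uu j * sin t ^ (2 * j) / (2 * (j : ℝ) + 1))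
  · intro n
    exact (by fun_prop : Continuous _).aestronglyMeasurable
  · intro n
    refine Eventually.of_forall fun s hs => ?_
    rw [uIoc_of_le h0.le] at hs
    have := sin_nonneg_of_nonneg_of_le_pi hs.1.le (by linarith [pi_pos, hs.2])
    have : sin s ≤ sin t := sin_le_sin_of_le_of_le_pi_div_two (by linarith [hs.1, pi_pos]) h.le hs.2
    have := uu_pos n
    rw [norm_mul, Real.norm_eq_abs, Real.norm_eq_abs,
      abs_of_nonneg (by positivity : 0 ≤ uu n * sin s ^ (2 * n) / (2 * (n : ℝ) + 1))]
    calc _ ≤ 1 * (uu n * sin s ^ (2 * n) / (2 * (n : ℝ) + 1)) := by gcongr; exact hw1 s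
      _ ≤ _ := by rw [one_mul]; gcongr
  · exact Eventually.of_forall fun s _ => (hasSum_E0 h0 h).summable
  · exact intervalIntegrable_const
  · refine Eventually.of_forall fun s hs => ?_
    rw [uIoc_of_le h0.le] at hs
    exact (hasSum_E0 hs.1 (by linarith [hs.2])).mul_left _

noncomputable def WW (x : ℝ) : ℝ := ∫ y in (0 : ℝ)..x, (sinc y)⁻¹

lemma hasSum_W {t : ℝ} (h0 : 0 < t) (h : t < π / 2) :
    HasSum (fun j : ℕ => uu j * sin t ^ (2 * j + 1) / (2 * (j : ℝ) + 1) ^ 2) (WW t) := by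
  convert hasSum_weight h0 h continuous_cos abs_cos_le_one using 1
  · ext j
    have hd : ∀ s ∈ uIcc (0 : ℝ) t, HasDerivAt
      (fun s => uu j * sin s ^ (2 * j + 1) / (2 * (j : ℝ) + 1) ^ 2)
      (cos s * (uu j * sin s ^ (2 * j) / (2 * (j : ℝ) + 1))) s := by
      intro s _
      refine ((((hasDerivAt_sin s).pow (2 * j + 1)).const_mul (uu j)).div_const
        ((2 * (j : ℝ) + 1) ^ 2)).congr_deriv ?_
      have e1 : 2 * j + 1 - 1 = 2 * j := by omega
      rw [e1]
      push_cast
      field_simp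
    rw [intervalIntegral.integral_eq_sub_of_hasDerivAt hd
      ((by fun_prop : Continuous _).intervalIntegrable _ _)]
    simp
  · unfold WW
    apply intervalIntegral.integral_congr_ae
    refine Eventually.of_forall fun s hs => ?_
    rw [uIoc_of_le h0.le] at hs
    have hc : 0 < cos s := cos_pos_of_mem_Ioo ⟨by linarith [hs.1, pi_pos], by linarith [hs.2]⟩
    rw [sinc_of_ne_zero hs.1.ne']
    field_simp

lemma hasSum_V {t : ℝ} (h0 : 0 < t) (h : t < π / 2) :
    HasSum (fun j : ℕ => EE j t / (2 * (j : ℝ) + 1)) (WW (2 * t) / 2) := by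
  convert hasSum_weight h0 h (w := fun _ => 1) continuous_const (by simp) using 1
  · ext j
    simp only [one_mul]
    rw [intervalIntegral.integral_div, intervalIntegral.integral_const_mul]
    rfl
  · unfold WW
    have := intervalIntegral.integral_comp_mul_left (a := 0) (b := t) (fun y => (sinc y)⁻¹) (c := 2)
      (by norm_num)
    rw [mul_zero] at this
    rw [div_eq_inv_mul, ← smul_eq_mul, ← this]
    apply intervalIntegral.integral_congr_ae
    refine Eventually.of_forall fun s hs => ?_
    rw [uIoc_of_le h0.le] at hs
    have hc : 0 < cos s := cos_pos_of_mem_Ioo ⟨by linarith [hs.1, pi_pos], by linarith [hs.2]⟩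
    have h1 := hs.1
    rw [sinc_of_ne_zero (by positivity), sin_two_mul]
    field_simp

lemma hasSum_F {t : ℝ} (h0 : 0 < t) (h : t < π / 2) :
    HasSum (fun a : ℕ => EE (a + 1) t / (2 * (a : ℝ) + 1)) (WW (2 * t) / 2 - cos t * WW t) := by
  refine ((hasSum_V h0 h).sub ((hasSum_W h0 h).mul_left (cos t))).congr_fun ?_ |> id
  intro a
  have := EE_rec a t
  rw [show EE (a + 1) t = EE a t - (EE a t - EE (a + 1) t) by ring, ← this]
  field_simp
  ring

lemma WW_half : WW (π / 2) = 2 * ∑' k : ℕ, (-1 : ℝ) ^ k / (2 * (k : ℝ) + 1) ^ 2 := by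
  have hsub : ∫ u in (0 : ℝ)..1, ((fun y => (sinc y)⁻¹) ∘ fun u => 2 * arctan u) u * (2 * (1 / (1 + u ^ 2)))
      = WW (π / 2) := by
    rw [intervalIntegral.integral_comp_mul_deriv'' (f := fun u => 2 * arctan u)]
    · unfold WW; simp; congr 1; ring
    · exact (continuous_const.mul continuous_arctan).continuousOn
    · intro x _
      exact ((hasDerivAt_arctan x).const_mul 2).hasDerivWithinAt
    · apply Continuous.continuousOn
      have : ∀ u : ℝ, 1 + u ^ 2 ≠ 0 := fun u => by positivity
      fun_prop (disch := assumption)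
    · apply ContinuousOn.inv₀ continuous_sinc.continuousOn
      rintro y ⟨u, hu, rfl⟩
      rw [uIcc_of_le zero_le_one] at hu
      simp only
      rcases eq_or_lt_of_le hu.1 with h | h
      · simp [← h]
      · have h1 : 0 < arctan u := arctan_pos.2 h
        have h2 := arctan_lt_pi_div_two u
        rw [sinc_of_ne_zero (by positivity)]
        have := sin_pos_of_pos_of_lt_pi (x := 2 * arctan u) (by positivity) (by linarith)
        positivity
  rw [← hsub, intervalIntegral.integral_of_le zero_le_one]
  have hi : ∀ k : ℕ, IntegrableOn (fun u : ℝ => 2 * ((-1 : ℝ) ^ k * u ^ (2 * k) / (2 * k + 1)))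
      (Ioc 0 1) := fun k =>
    ((by fun_prop : Continuous _).intervalIntegrable (μ := volume) 0 1).1
  have hv : ∀ (c : ℝ) (k : ℕ), ∫ u in Ioc (0 : ℝ) 1, 2 * (c * u ^ (2 * k) / (2 * k + 1)) =
      2 * (c / (2 * k + 1) ^ 2) := by
    intro c k
    rw [← intervalIntegral.integral_of_le zero_le_one, intervalIntegral.integral_const_mul,
      intervalIntegral.integral_div, intervalIntegral.integral_const_mul, integral_pow]
    push_cast
    simp
    field_simp
  have hs : Summable fun k : ℕ => ∫ u in Ioc (0 : ℝ) 1, ‖2 * ((-1 : ℝ) ^ k * u ^ (2 * k) / (2 * k + 1))‖ := by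
    have e : ∀ k : ℕ, ∫ u in Ioc (0 : ℝ) 1, ‖2 * ((-1 : ℝ) ^ k * u ^ (2 * k) / (2 * k + 1))‖
        = 2 * (1 / (2 * k + 1) ^ 2) := by
      intro k
      rw [← hv]
      apply setIntegral_congr_fun measurableSet_Ioc
      intro u hu
      have : 0 ≤ u ^ (2 * k) := by rw [pow_mul]; positivity
      have h3 : (0 : ℝ) < 2 * k + 1 := by positivity
      simp [abs_of_pos h3, abs_of_nonneg hu.1.le]
    simp_rw [e]
    apply Summable.mul_left
    have := (summable_nat_add_iff 1).2 (Real.summable_one_div_nat_pow.2 (one_lt_two))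
    refine this.of_nonneg_of_le (fun k => by positivity) (fun k => ?_)
    push_cast
    gcongr
    have : (0:ℝ) ≤ k := by positivity
    linarith
  have := hasSum_integral_of_summable_integral_norm hi hs
  simp_rw [hv] at this
  rw [← tsum_mul_left, this.tsum_eq]
  have hne : ∀ᵐ u : ℝ ∂(volume.restrict (Ioc (0 : ℝ) 1)), u ≠ 1 := by
    apply ae_restrict_of_ae
    exact Measure.ae_ne volume 1
  apply integral_congr_ae
  filter_upwards [hne, ae_restrict_mem measurableSet_Ioc] with u hu1 hu
  have hlt : u < 1 := lt_of_le_of_ne hu.2 hu1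
  have hu0 := hu.1
  have h1 := (Real.hasSum_arctan (x := u) (by rw [Real.norm_eq_abs, abs_of_pos hu0]; exact hlt)).mul_left (2 / u)
  have h2 : HasSum (fun k : ℕ => 2 * ((-1 : ℝ) ^ k * u ^ (2 * k) / (2 * k + 1))) (2 / u * arctan u) := by
    refine h1.congr_fun ?_ |> id
    intro k
    push_cast
    field_simp
    try ring
  rw [h2.tsum_eq]
  have ha : 0 < arctan u := arctan_pos.2 hu0
  simp only [Function.comp]
  rw [sinc_of_ne_zero (by positivity), sin_two_mul, sin_arctan, cos_arctan]
  have : √(1 + u ^ 2) ^ 2 = 1 + u ^ 2 := Real.sq_sqrt (by positivity)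
  field_simp
  rw [this]
lemma sinc_ne_zero_of {x : ℝ} (hx : x ∈ Ioo (-π) π) : sinc x ≠ 0 := by
  rcases eq_or_ne x 0 with h | h
  · simp [h]
  · rw [sinc_of_ne_zero h]
    refine div_ne_zero (fun h' => h ?_) h
    exact (sin_eq_zero_iff_of_lt_of_lt hx.1 hx.2).1 h'

lemma contOn_inv_sinc : ContinuousOn (fun y => (sinc y)⁻¹) (Ioo (-π) π) :=
  continuous_sinc.continuousOn.inv₀ fun _ hx => sinc_ne_zero_of hx

lemma hasDerivAt_gen {f : ℝ → ℝ} (hf : ContinuousOn f (Ioo (-π) π)) {x : ℝ} (hx : x ∈ Ioo (-π) π) :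
    HasDerivAt (fun x => ∫ y in (0 : ℝ)..x, f y) (f x) x := by
  have h0 : (0 : ℝ) ∈ Ioo (-π) π := ⟨by linarith [pi_pos], pi_pos⟩
  apply intervalIntegral.integral_hasDerivAt_right
  · apply ContinuousOn.intervalIntegrable
    apply hf.mono
    exact (ordConnected_Ioo).uIcc_subset h0 hx
  · exact hf.stronglyMeasurableAtFilter isOpen_Ioo x hx
  · exact hf.continuousAt (isOpen_Ioo.mem_nhds hx)

lemma WW_deriv {x : ℝ} (hx : x ∈ Ioo (-π) π) : HasDerivAt WW (sinc x)⁻¹ x :=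
  hasDerivAt_gen contOn_inv_sinc hx

lemma WW_zero : WW 0 = 0 := by simp [WW]

noncomputable def pp (y : ℝ) : ℝ := dslope WW 0 y * (sinc y)⁻¹

lemma contOn_pp : ContinuousOn pp (Ioo (-π) π) := by
  refine ContinuousOn.mul ?_ contOn_inv_sinc
  have h0 : (0 : ℝ) ∈ Ioo (-π) π := ⟨by linarith [pi_pos], pi_pos⟩
  rw [continuousOn_dslope (isOpen_Ioo.mem_nhds h0)]
  exact ⟨fun x hx => (WW_deriv hx).continuousAt.continuousWithinAt, (WW_deriv h0).differentiableAt⟩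

noncomputable def PP (x : ℝ) : ℝ := ∫ y in (0 : ℝ)..x, pp y

lemma PP_deriv {x : ℝ} (hx : x ∈ Ioo (-π) π) : HasDerivAt PP (pp x) x :=
  hasDerivAt_gen contOn_pp hx

lemma PP_zero : PP 0 = 0 := by simp [PP]

lemma pp_eq {x : ℝ} (hx : x ≠ 0) : pp x = WW x / sin x := by
  unfold pp
  rw [dslope_of_ne _ hx, slope_def_field, WW_zero, sinc_of_ne_zero hx]
  field_simp
  simp

lemma WW_deriv' {x : ℝ} (h0 : 0 < x) (h1 : x < π) : HasDerivAt WW (x / sin x) x := by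
  have := WW_deriv (x := x) ⟨by linarith, h1⟩
  rwa [sinc_of_ne_zero h0.ne', inv_div] at this

lemma PP_deriv' {x : ℝ} (h0 : 0 < x) (h1 : x < π) : HasDerivAt PP (WW x / sin x) x := by
  have := PP_deriv (x := x) ⟨by linarith, h1⟩
  rwa [pp_eq h0.ne'] at this

noncomputable def LL (x : ℝ) : ℝ := log (sin x) - log (1 + cos x)

lemma LL_deriv {x : ℝ} (h0 : 0 < x) (h1 : x < π) : HasDerivAt LL (1 / sin x) x := by
  have hs : 0 < sin x := sin_pos_of_pos_of_lt_pi h0 h1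
  have hc : 0 < 1 + cos x := by
    have : cos x ≠ -1 := by
      intro h; have := sin_sq_add_cos_sq x; rw [h] at this; nlinarith
    have := lt_of_le_of_ne (neg_one_le_cos x) this.symm
    linarith
  refine (((hasDerivAt_sin x).log hs.ne').sub
    (((hasDerivAt_cos x).const_add 1).log hc.ne')).congr_deriv ?_
  field_simp
  have := sin_sq_add_cos_sq x
  linear_combination this

lemma const_of_deriv {f : ℝ → ℝ} (hf : ∀ x ∈ Ioo 0 π, HasDerivAt f 0 x) {x y : ℝ}
    (hx : x ∈ Ioo 0 π) (hy : y ∈ Ioo 0 π) : f x = f y :=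
  isOpen_Ioo.is_const_of_deriv_eq_zero isPreconnected_Ioo
    (fun z hz => (hf z hz).differentiableAt.differentiableWithinAt)
    (fun z hz => (hf z hz).deriv) hx hy

lemma half_mem : π / 2 ∈ Ioo 0 π := ⟨by linarith [pi_pos], by linarith [pi_pos]⟩

lemma LL_half : LL (π / 2) = 0 := by simp [LL]

lemma comp_refl {f : ℝ → ℝ} {f' x : ℝ} (h : HasDerivAt f f' (π - x)) :
    HasDerivAt (fun y => f (π - y)) (-f') x := by
  have := HasDerivAt.comp x h ((hasDerivAt_id x).const_sub π)
  exact this.congr_deriv (by ring)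

lemma WW_refl {x : ℝ} (hx : x ∈ Ioo 0 π) : WW (π - x) = WW x - π * LL x := by
  have h := const_of_deriv (f := fun y => WW (π - y) - WW y + π * LL y) (fun y hy => by
    have h1 := WW_deriv' (x := π - y) (by linarith [hy.2]) (by linarith [hy.1])
    have hs : 0 < sin y := sin_pos_of_pos_of_lt_pi hy.1 hy.2
    refine (((comp_refl h1).sub (WW_deriv' hy.1 hy.2)).add
      ((LL_deriv hy.1 hy.2).const_mul π)).congr_deriv ?_
    rw [sin_pi_sub]
    field_simp
    ring) hx half_mem
  simp only [LL_half, show π - π / 2 = π / 2 by ring] at h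
  linarith

lemma PP_refl {x : ℝ} (hx : x ∈ Ioo 0 π) :
    PP (π - x) = 2 * PP (π / 2) + π * LL x ^ 2 / 2 - PP x := by
  have h := const_of_deriv (f := fun y => PP (π - y) + PP y - π * LL y ^ 2 / 2) (fun y hy => by
    have h1 := PP_deriv' (x := π - y) (by linarith [hy.2]) (by linarith [hy.1])
    have hs : 0 < sin y := sin_pos_of_pos_of_lt_pi hy.1 hy.2
    refine (((comp_refl h1).add (PP_deriv' hy.1 hy.2)).sub
      ((((LL_deriv hy.1 hy.2).pow 2).const_mul π).div_const 2)).congr_deriv ?_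
    rw [sin_pi_sub, WW_refl hy]
    push_cast
    field_simp
    ring) hx half_mem
  simp only [LL_half, show π - π / 2 = π / 2 by ring] at h
  linarith

lemma LW_tendsto : Tendsto (fun y => LL y * WW y) (𝓝[>] 0) (𝓝 0) := by
  have h0 : (0 : ℝ) ∈ Ioo (-π) π := ⟨by linarith [pi_pos], pi_pos⟩
  have h1 : ContinuousAt (fun y => (sin y * log (sin y)) * pp y - log (1 + cos y) * WW y) 0 := by
    apply ContinuousAt.sub
    · apply ContinuousAt.mul
      · exact (Real.continuous_mul_log.comp continuous_sin).continuousAt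
      · exact contOn_pp.continuousAt (isOpen_Ioo.mem_nhds h0)
    · apply ContinuousAt.mul
      · apply ContinuousAt.log
        · fun_prop
        · simp
      · exact (WW_deriv h0).continuousAt
  have h2 := h1.tendsto
  simp only [sin_zero, zero_mul, WW_zero, mul_zero, sub_zero] at h2
  refine (h2.mono_left nhdsWithin_le_nhds).congr' ?_
  have : Ioo (0 : ℝ) π ∈ 𝓝[>] (0 : ℝ) := Ioo_mem_nhdsGT pi_pos
  filter_upwards [this] with y hy
  have hs : 0 < sin y := sin_pos_of_pos_of_lt_pi hy.1 hy.2
  rw [pp_eq hy.1.ne', LL]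
  field_simp

noncomputable def Phi (t : ℝ) : ℝ :=
  4 * (π / 2 * (PP (2 * t) / 2 - PP t) - (WW (2 * t) / 2) ^ 2 / 2 + WW t ^ 2 / 2)

noncomputable def HH (t : ℝ) : ℝ :=
  4 * (π / 2 - t) / (sin t * cos t) * (WW (2 * t) / 2 - cos t * WW t)

lemma comp_two {f : ℝ → ℝ} {f' x : ℝ} (h : HasDerivAt f f' (2 * x)) :
    HasDerivAt (fun y => f (2 * y)) (2 * f') x := by
  have := HasDerivAt.comp x h ((hasDerivAt_id x).const_mul 2)
  exact this.congr_deriv (by ring)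

lemma Phi_deriv {t : ℝ} (h0 : 0 < t) (h : t < π / 2) : HasDerivAt Phi (HH t) t := by
  have hs : 0 < sin t := sin_pos_of_pos_of_lt_pi h0 (by linarith [pi_pos])
  have hc : 0 < cos t := cos_pos_of_mem_Ioo ⟨by linarith, h⟩
  have p2 := comp_two (PP_deriv' (x := 2 * t) (by linarith) (by linarith))
  have w2 := comp_two (WW_deriv' (x := 2 * t) (by linarith) (by linarith))
  have p1 := PP_deriv' h0 (by linarith)
  have w1 := WW_deriv' h0 (by linarith)
  refine (((((p2.div_const 2).sub p1).const_mul (π / 2)).sub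
    (((w2.div_const 2).pow 2).div_const 2)).add ((w1.pow 2).div_const 2)).const_mul 4
    |>.congr_deriv ?_
  rw [sin_two_mul, HH]
  push_cast
  field_simp
  ring

lemma Phi_contAt {t : ℝ} (h0 : 0 ≤ t) (h : t < π / 2) : ContinuousAt Phi t := by
  have hp := pi_pos
  have p2 := comp_two (PP_deriv (x := 2 * t) ⟨by linarith, by linarith⟩)
  have w2 := comp_two (WW_deriv (x := 2 * t) ⟨by linarith, by linarith⟩)
  have p1 := PP_deriv (x := t) ⟨by linarith, by linarith⟩
  have w1 := WW_deriv (x := t) ⟨by linarith, by linarith⟩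
  exact ((((((p2.div_const 2).sub p1).const_mul (π / 2)).sub
    (((w2.div_const 2).pow 2).div_const 2)).add ((w1.pow 2).div_const 2)).const_mul 4).continuousAt

lemma Phi_tendsto : Tendsto Phi (𝓝[<] (π / 2)) (𝓝 (2 * WW (π / 2) ^ 2)) := by
  have hp := pi_pos
  have hy : Tendsto (fun t : ℝ => π - 2 * t) (𝓝[<] (π / 2)) (𝓝[>] 0) := by
    apply tendsto_nhdsWithin_of_tendsto_nhds_of_eventually_within
    · have : ContinuousAt (fun t : ℝ => π - 2 * t) (π / 2) := by fun_prop
      have := this.tendsto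
      simp only [show π - 2 * (π / 2) = 0 by ring] at this
      exact this.mono_left nhdsWithin_le_nhds
    · filter_upwards [self_mem_nhdsWithin] with t ht
      simp only [mem_Iio] at ht
      simp only [mem_Ioi]; linarith
  have h0 : (0 : ℝ) ∈ Ioo (-π) π := ⟨by linarith, hp⟩
  have hP : Tendsto PP (𝓝[>] 0) (𝓝 0) := by
    have := (PP_deriv h0).continuousAt.tendsto
    rw [PP_zero] at this
    exact this.mono_left nhdsWithin_le_nhds
  have hW : Tendsto WW (𝓝[>] 0) (𝓝 0) := by
    have := (WW_deriv h0).continuousAt.tendsto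
    rw [WW_zero] at this
    exact this.mono_left nhdsWithin_le_nhds
  have hm : π / 2 ∈ Ioo (-π) π := ⟨by linarith, by linarith⟩
  have hP2 : Tendsto PP (𝓝[<] (π / 2)) (𝓝 (PP (π / 2))) :=
    (PP_deriv hm).continuousAt.tendsto.mono_left nhdsWithin_le_nhds
  have hW2 : Tendsto WW (𝓝[<] (π / 2)) (𝓝 (WW (π / 2))) :=
    (WW_deriv hm).continuousAt.tendsto.mono_left nhdsWithin_le_nhds
  have key := (((((hP2.const_sub (PP (π / 2))).const_mul (π / 2)).sub
    ((hP.comp hy).const_mul (π / 4))).sub (((hW.comp hy).pow 2).div_const 8)).add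
    ((LW_tendsto.comp hy).const_mul (π / 4))).add ((hW2.pow 2).div_const 2) |>.const_mul 4
  have e : 4 * (π / 2 * (PP (π / 2) - PP (π / 2)) - π / 4 * 0 - 0 ^ 2 / 8 + π / 4 * 0
      + WW (π / 2) ^ 2 / 2) = 2 * WW (π / 2) ^ 2 := by ring
  rw [e] at key
  refine key.congr' ?_
  have : Ioo (0 : ℝ) (π / 2) ∈ 𝓝[<] (π / 2) := Ioo_mem_nhdsLT (by linarith)
  filter_upwards [this] with t ht
  have hy' : π - 2 * t ∈ Ioo 0 π := ⟨by linarith [ht.2], by linarith [ht.1]⟩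
  have e1 := WW_refl hy'
  have e2 := PP_refl hy'
  rw [show π - (π - 2 * t) = 2 * t by ring] at e1 e2
  simp only [Function.comp, Phi]
  rw [e1, e2]
  ring

lemma HH_nonneg {t : ℝ} (h0 : 0 < t) (h : t < π / 2) : 0 ≤ HH t := by
  have hs : 0 < sin t := sin_pos_of_pos_of_lt_pi h0 (by linarith [pi_pos])
  have hc : 0 < cos t := cos_pos_of_mem_Ioo ⟨by linarith, h⟩
  have h1 : 0 ≤ WW (2 * t) / 2 - cos t * WW t :=
    (hasSum_F h0 h).nonneg (fun a => div_nonneg (EE_nonneg _ h0.le h) (by positivity))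
  have : 0 ≤ π / 2 - t := by linarith
  unfold HH
  positivity

lemma lintegral_HH :
    ∫⁻ t in Ioo (0 : ℝ) (π / 2), ENNReal.ofReal (HH t) = ENNReal.ofReal (2 * WW (π / 2) ^ 2) := by
  have hp : (0 : ℝ) < π / 2 := by positivity
  set g := Function.update Phi (π / 2) (2 * WW (π / 2) ^ 2) with hg
  have hcont : ContinuousOn g (Icc 0 (π / 2)) := by
    intro t ht
    rcases eq_or_lt_of_le ht.2 with h | h
    · subst h
      rw [hg, continuousWithinAt_update_same]
      refine Phi_tendsto.mono_left (nhdsWithin_mono _ ?_)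
      intro x hx
      exact lt_of_le_of_ne hx.1.2 hx.2
    · rw [hg]
      apply ContinuousAt.continuousWithinAt
      rw [continuousAt_update_of_ne h.ne]
      exact Phi_contAt ht.1 h
  have hder : ∀ t ∈ Ioo 0 (π / 2), HasDerivAt g (HH t) t := by
    intro t ht
    refine (Phi_deriv ht.1 ht.2).congr_of_eventuallyEq ?_
    filter_upwards [isOpen_Iio.mem_nhds ht.2] with x hx
    exact Function.update_of_ne (ne_of_lt hx) _ _
  have hint := intervalIntegral.integrableOn_deriv_of_nonneg hcont hder
    (fun t ht => HH_nonneg ht.1 ht.2)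
  have hI := intervalIntegral.integral_eq_sub_of_hasDerivAt_of_le hp.le hcont hder
    ((intervalIntegrable_iff_integrableOn_Ioc_of_le hp.le).2 hint)
  rw [← ofReal_integral_eq_lintegral_ofReal (hint.mono_set Ioo_subset_Ioc_self)]
  · rw [← integral_Ioc_eq_integral_Ioo, ← intervalIntegral.integral_of_le hp.le, hI, hg,
      Function.update_self, Function.update_of_ne hp.ne]
    simp [Phi, PP_zero, WW_zero]
  · filter_upwards [ae_restrict_mem measurableSet_Ioo] with t ht
    exact HH_nonneg ht.1 ht.2
noncomputable def idxEquiv : ℕ × ℕ × ℕ ≃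
    {p : ℕ × ℕ × ℕ // p.2.2 ≤ p.2.1 ∧ p.2.1 < p.1 ∧ 1 ≤ p.2.2} where
  toFun q := ⟨(q.1 + 1 + q.2.1 + q.2.2 + 1, q.1 + 1 + q.2.1, q.1 + 1), by
    refine ⟨?_, ?_, ?_⟩ <;> simp only <;> omega⟩
  invFun p := (p.1.2.2 - 1, p.1.2.1 - p.1.2.2, p.1.1 - p.1.2.1 - 1)
  left_inv q := by
    rcases q with ⟨a, b, c⟩
    simp only [Prod.mk.injEq]
    refine ⟨?_, ?_, ?_⟩ <;> omega
  right_inv p := by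
    rcases p with ⟨⟨a, b, c⟩, h1, h2, h3⟩
    simp only at h1 h2 h3
    simp only [Subtype.mk.injEq, Prod.mk.injEq]
    refine ⟨?_, ?_, ?_⟩ <;> omega

noncomputable def gg (p : ℕ × ℕ × ℕ) : ℝ :=
  (4 : ℝ) ^ p.1 / ((Nat.choose (2 * p.1) p.1 : ℝ) * (p.1 : ℝ) ^ 2 *
          (2 * (p.2.1 : ℝ) + 1) * (2 * (p.2.2 : ℝ) - 1))

lemma gg_eq (a b c : ℕ) : gg (a + 1 + b + c + 1, a + 1 + b, a + 1) =
    uu (a + 1 + b + c + 1) / ((a + 1 + b + c + 1 : ℕ) : ℝ) ^ 2 *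
      (1 / ((2 * ((a + 1 + b : ℕ) : ℝ) + 1) * (2 * (a : ℝ) + 1))) := by
  unfold gg uu
  have : 2 * ((a + 1 : ℕ) : ℝ) - 1 = 2 * a + 1 := by push_cast; ring
  simp only [this]
  field_simp

lemma ofReal_hasSum {f : ℕ → ℝ} {x : ℝ} (h : HasSum f x) (hn : ∀ n, 0 ≤ f n) :
    ∑' n, ENNReal.ofReal (f n) = ENNReal.ofReal x := by
  rw [← h.tsum_eq, ENNReal.ofReal_tsum_of_nonneg hn h.summable]

lemma tsum_c (a b : ℕ) : ∑' c, ENNReal.ofReal (gg (a + 1 + b + c + 1, a + 1 + b, a + 1)) =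
    ∫⁻ t in Ioo (0 : ℝ) (π / 2), ENNReal.ofReal (4 * (π / 2 - t) / (2 * (a : ℝ) + 1) *
      (uu (a + 1 + b) * sin t ^ (2 * (a + 1 + b)) / (2 * ((a + 1 + b : ℕ) : ℝ) + 1))) := by
  have hp : (0 : ℝ) < π / 2 := by positivity
  simp_rw [gg_eq]
  rw [ofReal_hasSum ((hasSum_T (a + 1 + b)).mul_right _)
    (fun c => by have := uu_pos (a + 1 + b + c + 1); positivity)]
  rw [← ofReal_integral_eq_lintegral_ofReal]
  · congr 1
    rw [← integral_Ioc_eq_integral_Ioo, ← intervalIntegral.integral_of_le hp.le, JJ,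
      ← intervalIntegral.integral_const_mul, ← intervalIntegral.integral_mul_const]
    congr 1
    ext t
    field_simp
  · exact ((by fun_prop : Continuous _).intervalIntegrable (μ := volume) 0 (π / 2)).1.mono_set
      Ioo_subset_Ioc_self
  · filter_upwards [ae_restrict_mem measurableSet_Ioo] with t ht
    have := uu_pos (a + 1 + b)
    have h1 : 0 ≤ π / 2 - t := by linarith [ht.2]
    have hs : 0 < sin t := sin_pos_of_pos_of_lt_pi ht.1 (by linarith [pi_pos, ht.2])
    simp only [Pi.zero_apply]
    positivity

lemma tsum_ab {t : ℝ} (h0 : 0 < t) (h : t < π / 2) :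
    ∑' a : ℕ, ∑' b : ℕ, ENNReal.ofReal (4 * (π / 2 - t) / (2 * (a : ℝ) + 1) *
      (uu (a + 1 + b) * sin t ^ (2 * (a + 1 + b)) / (2 * ((a + 1 + b : ℕ) : ℝ) + 1)))
      = ENNReal.ofReal (HH t) := by
  have hs : 0 < sin t := sin_pos_of_pos_of_lt_pi h0 (by linarith [pi_pos])
  have hc : 0 < cos t := cos_pos_of_mem_Ioo ⟨by linarith, h⟩
  have h1 : 0 ≤ π / 2 - t := by linarith
  have e : ∀ a : ℕ, ∑' b : ℕ, ENNReal.ofReal (4 * (π / 2 - t) / (2 * (a : ℝ) + 1) *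
      (uu (a + 1 + b) * sin t ^ (2 * (a + 1 + b)) / (2 * ((a + 1 + b : ℕ) : ℝ) + 1)))
      = ENNReal.ofReal (4 * (π / 2 - t) / (sin t * cos t) * (EE (a + 1) t / (2 * (a : ℝ) + 1))) := by
    intro a
    rw [ofReal_hasSum ((hasSum_E h0 h (a + 1)).mul_left _)
      (fun b => by have := uu_pos (a + 1 + b); positivity)]
    congr 1
    field_simp
  simp_rw [e]
  rw [ofReal_hasSum ((hasSum_F h0 h).mul_left _) (fun a => by
    have := EE_nonneg (a + 1) h0.le h; positivity)]
  rfl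

lemma tsum_all : ∑' q : ℕ × ℕ × ℕ, ENNReal.ofReal (gg (idxEquiv q).1) =
    ENNReal.ofReal (2 * WW (π / 2) ^ 2) := by
  rw [ENNReal.tsum_prod']
  simp_rw [ENNReal.tsum_prod']
  have : ∀ a b c : ℕ, (idxEquiv (a, b, c)).1 = (a + 1 + b + c + 1, a + 1 + b, a + 1) :=
    fun _ _ _ => rfl
  simp_rw [this, tsum_c]
  have hm : ∀ a b : ℕ, Measurable fun t : ℝ => ENNReal.ofReal (4 * (π / 2 - t) / (2 * (a : ℝ) + 1) *
      (uu (a + 1 + b) * sin t ^ (2 * (a + 1 + b)) / (2 * ((a + 1 + b : ℕ) : ℝ) + 1))) :=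
    fun a b => (by fun_prop : Continuous _).measurable.ennreal_ofReal
  have e : ∀ a : ℕ, _ := fun a => (lintegral_tsum (μ := volume.restrict (Ioo (0 : ℝ) (π / 2)))
    (fun b => (hm a b).aemeasurable)).symm
  simp_rw [e]
  rw [← lintegral_tsum (fun a => (Measurable.ennreal_tsum (hm a)).aemeasurable), ← lintegral_HH]
  apply setLIntegral_congr_fun measurableSet_Ioo
  intro t ht
  exact tsum_ab ht.1 ht.2

/-- `∑_{n₁ > n₂ ≥ n₃ ≥ 1} 4^{n₁}/(binom(2n₁,n₁) n₁² (2n₂+1)(2n₃−1)) = 8G²`. -/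
theorem stmt17 :
    (∑' p : {p : ℕ × ℕ × ℕ // p.2.2 ≤ p.2.1 ∧ p.2.1 < p.1 ∧ 1 ≤ p.2.2},
      (4 : ℝ) ^ p.1.1 /
        ((Nat.choose (2 * p.1.1) p.1.1 : ℝ) * (p.1.1 : ℝ) ^ 2 *
          (2 * (p.1.2.1 : ℝ) + 1) * (2 * (p.1.2.2 : ℝ) - 1))) =
    8 * (∑' k : ℕ, (-1 : ℝ) ^ k / (2 * (k : ℝ) + 1) ^ 2) ^ 2 := by
  have h1 : ∀ p : {p : ℕ × ℕ × ℕ // p.2.2 ≤ p.2.1 ∧ p.2.1 < p.1 ∧ 1 ≤ p.2.2}, 0 ≤ gg p.1 := by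
    intro p
    obtain ⟨⟨a, b, c⟩, rfl⟩ := idxEquiv.surjective p
    change 0 ≤ gg (a + 1 + b + c + 1, a + 1 + b, a + 1)
    rw [gg_eq]
    have := uu_pos (a + 1 + b + c + 1)
    positivity
  change (∑' p : {p : ℕ × ℕ × ℕ // p.2.2 ≤ p.2.1 ∧ p.2.1 < p.1 ∧ 1 ≤ p.2.2}, gg p.1) = _
  have h2 : ∀ p : {p : ℕ × ℕ × ℕ // p.2.2 ≤ p.2.1 ∧ p.2.1 < p.1 ∧ 1 ≤ p.2.2},
      gg p.1 = (ENNReal.ofReal (gg p.1)).toReal := fun p => (ENNReal.toReal_ofReal (h1 p)).symm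
  rw [tsum_congr h2, ← ENNReal.tsum_toReal_eq (fun _ => ENNReal.ofReal_ne_top),
    ← idxEquiv.tsum_eq, tsum_all, ENNReal.toReal_ofReal (by positivity), WW_half]
  ring
end

section
/- We have ∑_{n₁ ≥ n₂ ≥ 1} 3^{n₁} / (binom(2n₁, n₁) · (2n₁+1) · (2n₂)²) = 2π³ / (81 √3), where the double sum is over integers n₁ ≥ n₂ ≥ 1. -/
open Real

namespace Aux19

noncomputable def c (n : ℕ) : ℝ := 4 ^ n / ((Nat.choose (2 * n) n : ℝ) * (2 * (n : ℝ) + 1))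

noncomputable def H (n : ℕ) : ℝ := ∑ k ∈ Finset.Icc 1 n, 1 / (2 * (k : ℝ)) ^ 2

lemma c_succ (n : ℕ) : (2 * (n : ℝ) + 3) * c (n + 1) = (2 * n + 2) * c n := by
  have h := Nat.succ_mul_centralBinom_succ n
  have h2 : ((n : ℝ) + 1) * (Nat.centralBinom (n + 1) : ℝ)
      = 2 * (2 * n + 1) * (Nat.centralBinom n : ℝ) := by exact_mod_cast h
  have p1 : (0 : ℝ) < Nat.centralBinom n := by exact_mod_cast Nat.centralBinom_pos n
  have p2 : (0 : ℝ) < Nat.centralBinom (n + 1) := by exact_mod_cast Nat.centralBinom_pos (n + 1)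
  unfold c
  rw [← Nat.centralBinom_eq_two_mul_choose, ← Nat.centralBinom_eq_two_mul_choose]
  have q1 : (2 * (n : ℝ) + 1) ≠ 0 := by positivity
  have q2 : (2 * (n : ℝ) + 3) ≠ 0 := by positivity
  have q3 : (2 * ((n + 1 : ℕ) : ℝ) + 1) = 2 * (n : ℝ) + 3 := by push_cast; ring
  rw [q3, pow_succ]
  field_simp
  linear_combination (-2 : ℝ) * h2

lemma c_zero : c 0 = 1 := by simp [c]

lemma c_nonneg (n : ℕ) : 0 ≤ c n := by unfold c; positivity

lemma c_le (n : ℕ) : c n ≤ 1 := by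
  induction n with
  | zero => rw [c_zero]
  | succ n ih =>
    have h := c_succ n
    have := c_nonneg n
    have hn : (0 : ℝ) ≤ n := Nat.cast_nonneg n
    by_contra hc
    push Not at hc
    nlinarith

lemma H_zero : H 0 = 0 := by simp [H]

lemma H_succ (n : ℕ) : H (n + 1) = H n + 1 / (2 * (n : ℝ) + 2) ^ 2 := by
  unfold H
  rw [Finset.sum_Icc_succ_top (by omega)]
  push_cast
  ring_nf

lemma H_nonneg (n : ℕ) : 0 ≤ H n := by unfold H; positivity

lemma H_le (n : ℕ) : H n ≤ n + 1 := by
  induction n with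
  | zero => simp [H_zero]
  | succ n ih =>
    rw [H_succ]
    push_cast
    have : 1 / (2 * (n : ℝ) + 2) ^ 2 ≤ 1 := by
      rw [div_le_one (by positivity)]
      have hn : (0 : ℝ) ≤ n := Nat.cast_nonneg n
      nlinarith
    linarith

lemma summ_bound (e : ℕ) (r : ℝ) (h0 : 0 ≤ r) (h1 : r < 1) :
    Summable fun n : ℕ => ((n : ℝ) + 1) * (2 * n + e + 1) * r ^ (2 * n + e) := by
  have hr : ‖r ^ 2‖ < 1 := by
    rw [norm_pow, Real.norm_of_nonneg h0]; nlinarith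
  have s0 := summable_pow_mul_geometric_of_norm_lt_one 0 hr
  have s1 := summable_pow_mul_geometric_of_norm_lt_one 1 hr
  have s2 := summable_pow_mul_geometric_of_norm_lt_one 2 hr
  have := (((s2.mul_left 2).add (s1.mul_left ((e : ℝ) + 3))).add
    (s0.mul_left ((e : ℝ) + 1))).mul_left (r ^ e)
  refine this.congr fun n => ?_
  rw [pow_add, pow_mul]
  ring

lemma summ1 (e : ℕ) (a : ℕ → ℝ) (ha : ∀ n, |a n| ≤ n + 1) (x : ℝ) (hx : |x| < 1) :
    Summable fun n : ℕ => a n * (2 * (n : ℝ) + e + 1) * x ^ (2 * n + e) := by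
  refine Summable.of_norm_bounded (summ_bound e |x| (abs_nonneg x) hx) fun n => ?_
  rw [Real.norm_eq_abs, abs_mul, abs_mul, abs_pow,
    abs_of_nonneg (show (0 : ℝ) ≤ 2 * (n : ℝ) + e + 1 by positivity)]
  gcongr
  exact ha n

lemma summ0 (e : ℕ) (a : ℕ → ℝ) (ha : ∀ n, |a n| ≤ n + 1) (x : ℝ) (hx : |x| < 1) :
    Summable fun n : ℕ => a n * x ^ (2 * n + e) := by
  refine Summable.of_norm_bounded (summ_bound e |x| (abs_nonneg x) hx) fun n => ?_
  rw [Real.norm_eq_abs, abs_mul, abs_pow]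
  gcongr
  have hn : (0 : ℝ) ≤ n := Nat.cast_nonneg n
  have he : (0 : ℝ) ≤ e := Nat.cast_nonneg e
  have := ha n
  nlinarith [mul_nonneg hn he, mul_nonneg hn hn]

lemma deriv_lem (e : ℕ) (a : ℕ → ℝ) (ha : ∀ n, |a n| ≤ n + 1) (x : ℝ) (hx : |x| < 1) :
    HasDerivAt (fun y => ∑' n : ℕ, a n * y ^ (2 * n + e + 1))
      (∑' n : ℕ, a n * (2 * (n : ℝ) + e + 1) * x ^ (2 * n + e)) x := by
  obtain ⟨r, hr1, hr2⟩ := exists_between hx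
  have hr0 : 0 < r := lt_of_le_of_lt (abs_nonneg x) hr1
  refine hasDerivAt_tsum_of_isPreconnected (t := Metric.ball (0 : ℝ) r)
    (g := fun n y => a n * y ^ (2 * n + e + 1))
    (g' := fun n y => a n * (2 * (n : ℝ) + e + 1) * y ^ (2 * n + e))
    (summ_bound e r hr0.le hr2) Metric.isOpen_ball
    (convex_ball (0 : ℝ) r).isPreconnected ?_ ?_ (y₀ := x) ?_ ?_ ?_
  · intro n y _
    have := (hasDerivAt_pow (2 * n + e + 1) y).const_mul (a n)
    refine this.congr_deriv ?_
    rw [Nat.add_sub_cancel]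
    push_cast
    ring
  · intro n y hy
    have hy' : |y| ≤ r := by
      rw [Metric.mem_ball, dist_zero_right, Real.norm_eq_abs] at hy; exact hy.le
    rw [Real.norm_eq_abs, abs_mul, abs_mul, abs_pow,
      abs_of_nonneg (show (0 : ℝ) ≤ 2 * (n : ℝ) + e + 1 by positivity)]
    gcongr
    exact ha n
  · rw [Metric.mem_ball, dist_zero_right, Real.norm_eq_abs]; exact hr1
  · exact summ0 (e + 1) a ha x hx
  · rw [Metric.mem_ball, dist_zero_right, Real.norm_eq_abs]; exact hr1

lemma ode (K : ℕ → ℝ) (ha : ∀ n, |c n * K n| ≤ n + 1) (x : ℝ) (hx : |x| < 1) :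
    (1 - x ^ 2) * (∑' n : ℕ, (c n * K n) * (2 * (n : ℝ) + (0 : ℕ) + 1) * x ^ (2 * n + 0))
      - x * (∑' n : ℕ, (c n * K n) * x ^ (2 * n + 0 + 1))
    = K 0 + ∑' n : ℕ, (2 * (n : ℝ) + 2) * c n * (K (n + 1) - K n) * x ^ (2 * n + 2) := by
  have s1 := summ1 0 _ ha x hx
  have s0 := summ0 1 _ ha x hx
  have e1 := s1.tsum_eq_zero_add
  have s1' := (summable_nat_add_iff 1).2 s1
  have hA := s1.hasSum.mul_left (x ^ 2)
  have hB := s0.hasSum.mul_left x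
  have hC := (s1'.hasSum.sub hA).sub hB
  have hD := hC.tsum_eq
  have hE : ∀ n : ℕ, (2 * (n : ℝ) + 2) * c n * (K (n + 1) - K n) * x ^ (2 * n + 2) =
      c (n + 1) * K (n + 1) * (2 * ((n + 1 : ℕ) : ℝ) + ((0 : ℕ) : ℝ) + 1) * x ^ (2 * (n + 1) + 0) -
          x ^ 2 * (c n * K n * (2 * (n : ℝ) + ((0 : ℕ) : ℝ) + 1) * x ^ (2 * n + 0)) -
        x * (c n * K n * x ^ (2 * n + 1)) := by
    intro n
    have := c_succ n
    push_cast
    linear_combination (-K (n+1) * x ^ (2 * n + 2)) * this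
  rw [tsum_congr hE, hD]
  simp only [c_zero] at e1
  norm_num at e1 ⊢
  linear_combination e1

noncomputable def g (x : ℝ) : ℝ := ∑' n : ℕ, (c n * 1) * x ^ (2 * n + 0 + 1)
noncomputable def h (x : ℝ) : ℝ := ∑' n : ℕ, (c n * H n) * x ^ (2 * n + 0 + 1)
noncomputable def k (x : ℝ) : ℝ := ∑' n : ℕ, (c n / (2 * (n : ℝ) + 2)) * x ^ (2 * n + 1 + 1)

lemma b1 (n : ℕ) : |c n * 1| ≤ n + 1 := by
  rw [mul_one, abs_of_nonneg (c_nonneg n)]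
  have hn : (0 : ℝ) ≤ n := Nat.cast_nonneg n
  linarith [c_le n]

lemma bH (n : ℕ) : |c n * H n| ≤ n + 1 := by
  rw [abs_of_nonneg (mul_nonneg (c_nonneg n) (H_nonneg n))]
  nlinarith [c_le n, c_nonneg n, H_nonneg n, H_le n]

lemma bk (n : ℕ) : |c n / (2 * (n : ℝ) + 2)| ≤ n + 1 := by
  have hn : (0 : ℝ) ≤ n := Nat.cast_nonneg n
  rw [abs_of_nonneg (div_nonneg (c_nonneg n) (by positivity)), div_le_iff₀ (by positivity)]
  nlinarith [c_le n]

lemma dk (x : ℝ) (hx : |x| < 1) : HasDerivAt k (g x) x := by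
  have := deriv_lem 1 _ bk x hx
  refine this.congr_deriv ?_
  unfold g
  refine tsum_congr fun n => ?_
  push_cast
  field_simp
  ring

lemma dg (x : ℝ) (hx : |x| < 1) :
    ∃ d, HasDerivAt g d x ∧ (1 - x ^ 2) * d - x * g x = 1 := by
  refine ⟨_, deriv_lem 0 _ b1 x hx, ?_⟩
  have := ode (fun _ => 1) b1 x hx
  simp only [sub_self, mul_zero, zero_mul, tsum_zero, add_zero] at this
  simpa [g] using this

lemma dh (x : ℝ) (hx : |x| < 1) :
    ∃ d, HasDerivAt h d x ∧ (1 - x ^ 2) * d - x * h x = k x := by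
  refine ⟨_, deriv_lem 0 _ bH x hx, ?_⟩
  have := ode H bH x hx
  unfold h k
  rw [this, H_zero, zero_add]
  refine tsum_congr fun n => ?_
  rw [H_succ]
  field_simp
  ring

lemma sin_lt {t : ℝ} (h0 : 0 ≤ t) (h1 : t ≤ π / 3) : |sin t| < 1 := by
  have hc : 0 < cos t := cos_pos_of_mem_Ioo ⟨by linarith [pi_pos], by linarith [pi_pos]⟩
  rw [abs_lt]
  constructor <;> nlinarith [sin_sq_add_cos_sq t]

lemma const (f : ℝ → ℝ) (hf0 : f 0 = 0)
    (hf : ∀ t, 0 ≤ t → t ≤ π / 3 → HasDerivAt f 0 t) (t : ℝ) (h0 : 0 ≤ t) (h1 : t ≤ π / 3) :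
    f t = 0 := by
  rw [← hf0]
  refine constant_of_has_deriv_right_zero (a := 0) (b := π / 3) ?_ ?_ t ⟨h0, h1⟩
  · exact fun y hy => (hf y hy.1 hy.2).continuousAt.continuousWithinAt
  · exact fun y hy => (hf y hy.1 hy.2.le).hasDerivWithinAt

lemma g_eq (t : ℝ) (h0 : 0 ≤ t) (h1 : t ≤ π / 3) : cos t * g (sin t) = t := by
  have := const (fun t => cos t * g (sin t) - t) (by simp [g]) ?_ t h0 h1
  · simpa [sub_eq_zero] using this
  intro t h0 h1
  obtain ⟨d, hd, e⟩ := dg (sin t) (sin_lt h0 h1)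
  have := ((hasDerivAt_cos t).mul (hd.comp t (hasDerivAt_sin t))).sub (hasDerivAt_id t)
  refine this.congr_deriv ?_
  simp only [Function.comp]
  linear_combination e + d * sin_sq_add_cos_sq t

lemma k_eq (t : ℝ) (h0 : 0 ≤ t) (h1 : t ≤ π / 3) : k (sin t) = t ^ 2 / 2 := by
  have := const (fun t => k (sin t) - t ^ 2 / 2) (by simp [k]) ?_ t h0 h1
  · simpa [sub_eq_zero] using this
  intro t h0 h1
  have := ((dk (sin t) (sin_lt h0 h1)).comp t (hasDerivAt_sin t)).sub
    ((hasDerivAt_pow 2 t).div_const 2)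
  refine this.congr_deriv ?_
  have := g_eq t h0 h1
  norm_num
  linear_combination this

lemma h_eq (t : ℝ) (h0 : 0 ≤ t) (h1 : t ≤ π / 3) : cos t * h (sin t) = t ^ 3 / 6 := by
  have := const (fun t => cos t * h (sin t) - t ^ 3 / 6) (by simp [h]) ?_ t h0 h1
  · simpa [sub_eq_zero] using this
  intro t h0 h1
  obtain ⟨d, hd, e⟩ := dh (sin t) (sin_lt h0 h1)
  have := ((hasDerivAt_cos t).mul (hd.comp t (hasDerivAt_sin t))).sub
    ((hasDerivAt_pow 3 t).div_const 6)
  refine this.congr_deriv ?_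
  have := k_eq t h0 h1
  simp only [Function.comp]
  norm_num
  linear_combination e + d * sin_sq_add_cos_sq t + this

lemma single : HasSum (fun n : ℕ => (3 : ℝ) ^ n /
    ((Nat.choose (2 * n) n : ℝ) * (2 * (n : ℝ) + 1)) * H n) (2 * π ^ 3 / (81 * Real.sqrt 3)) := by
  have hlt := sin_lt (t := π / 3) (by positivity) le_rfl
  have e := h_eq (π / 3) (by positivity) le_rfl
  have s := (summ0 1 _ bH _ hlt).hasSum
  have s' := s.mul_left (sin (π / 3))⁻¹
  rw [sin_pi_div_three, cos_pi_div_three] at *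
  have h3 : (√3 : ℝ) ≠ 0 := by positivity
  have hsq : (√3 : ℝ) ^ 2 = 3 := Real.sq_sqrt (by norm_num)
  have E1 : (fun n : ℕ => (3 : ℝ) ^ n /
    ((Nat.choose (2 * n) n : ℝ) * (2 * (n : ℝ) + 1)) * H n) =
    fun n : ℕ => (√3 / 2)⁻¹ * (c n * H n * (√3 / 2) ^ (2 * n + 1)) := by
    funext n
    have : (√3 / 2 : ℝ) ^ (2 * n + 1) = (3 : ℝ) ^ n / 4 ^ n * (√3 / 2) := by
      rw [pow_succ, pow_mul, div_pow, hsq, ← div_pow]; norm_num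
    rw [this]
    unfold c
    field_simp
  have E2 : 2 * π ^ 3 / (81 * √3) = (√3 / 2)⁻¹ * h (√3 / 2) := by
    have : h (√3 / 2) = π ^ 3 / 81 := by linear_combination 2 * e
    rw [this]
    field_simp
  rw [E1, E2]
  exact s'

end Aux19

open Aux19 in
/-- `∑_{n₁ ≥ n₂ ≥ 1} 3^{n₁}/(binom(2n₁,n₁)(2n₁+1)(2n₂)²) = 2π³/(81√3)`. -/
theorem stmt19 :
    (∑' p : {p : ℕ × ℕ // p.2 ≤ p.1 ∧ 1 ≤ p.2},
      (3 : ℝ) ^ p.1.1 /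
        ((Nat.choose (2 * p.1.1) p.1.1 : ℝ) * (2 * (p.1.1 : ℝ) + 1) *
          (2 * (p.1.2 : ℝ)) ^ 2)) =
    2 * π ^ 3 / (81 * Real.sqrt 3) := by
  set F : ℕ × ℕ → ℝ := fun p => (3 : ℝ) ^ p.1 /
        ((Nat.choose (2 * p.1) p.1 : ℝ) * (2 * (p.1 : ℝ) + 1) * (2 * (p.2 : ℝ)) ^ 2) with hF
  set S : Set (ℕ × ℕ) := {p | p.2 ≤ p.1 ∧ 1 ≤ p.2} with hS
  have step : (∑' p : S, F p) = ∑' p, S.indicator F p := tsum_subtype S F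
  have inner : ∀ n : ℕ, HasSum (fun m => S.indicator F (n, m)) ((3 : ℝ) ^ n /
    ((Nat.choose (2 * n) n : ℝ) * (2 * (n : ℝ) + 1)) * H n) := by
    intro n
    have : (3 : ℝ) ^ n / ((Nat.choose (2 * n) n : ℝ) * (2 * (n : ℝ) + 1)) * H n
        = ∑ m ∈ Finset.Icc 1 n, S.indicator F (n, m) := by
      unfold H
      rw [Finset.mul_sum]
      refine Finset.sum_congr rfl fun m hm => ?_
      rw [Finset.mem_Icc] at hm
      rw [Set.indicator_of_mem (show (n, m) ∈ S from ⟨hm.2, hm.1⟩)]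
      simp only [hF]
      rw [div_mul_div_comm, mul_one]
    rw [this]
    refine hasSum_sum_of_ne_finset_zero fun m hm => ?_
    refine Set.indicator_of_notMem (fun hmem => hm ?_) _
    rw [Finset.mem_Icc]
    exact ⟨hmem.2, hmem.1⟩
  have hsum : Summable (S.indicator F) := by
    rw [summable_prod_of_nonneg]
    · refine ⟨fun n => (inner n).summable, ?_⟩
      simp_rw [fun n => (inner n).tsum_eq]
      exact single.summable
    · intro p
      refine Set.indicator_nonneg (fun p _ => ?_) p
      simp only [hF]
      positivity
  refine step.trans ?_
  rw [hsum.tsum_prod]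
  simp_rw [fun n => (inner n).tsum_eq]
  exact single.tsum_eq
end
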